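/- arXiv:0903.3854 — 2 statements merged into one kernel-verified Lean document; each statement's English description precedes it below -/
import Mathlib

section
/- For bigraded harmonic polynomial spaces on ℂⁿ, the product space satisfies H_{p,q} · H_{l,m} ⊆ ⊕_{j=0}^{ν} H_{p+l−j, q+m−j} (as subspaces of polynomials, where a product lies in the sum of the indicated harmonic spaces multiplied by appropriate powers of |z|²), with ν = min(p,m) + min(l,q). Concretely: every product PQ with P ∈ H_{p,q}, Q ∈ H_{l,m} can be written as Σ_{j=0}^{ν} |z|^{2j} R_j with R_j ∈ H_{p+l−j, q+m−j}. -/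
open Complex

noncomputable section

/-- Wirtinger derivative ∂/∂z_j = (1/2)(∂/∂x_j − i ∂/∂y_j). -/
def wderiv {n : ℕ} (j : Fin n) (f : (Fin n → ℂ) → ℂ) (z : Fin n → ℂ) : ℂ :=
  (1 / 2 : ℂ) * (fderiv ℝ f z (Pi.single j 1) - Complex.I * fderiv ℝ f z (Pi.single j Complex.I))

/-- Conjugate Wirtinger derivative ∂/∂z̄_j = (1/2)(∂/∂x_j + i ∂/∂y_j). -/
def wderivBar {n : ℕ} (j : Fin n) (f : (Fin n → ℂ) → ℂ) (z : Fin n → ℂ) : ℂ :=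
  (1 / 2 : ℂ) * (fderiv ℝ f z (Pi.single j 1) + Complex.I * fderiv ℝ f z (Pi.single j Complex.I))

/-- The Laplacian on ℂⁿ ≅ ℝ^{2n}: Δ = 4 Σ_k ∂²/(∂z_k ∂z̄_k). -/
def lap {n : ℕ} (f : (Fin n → ℂ) → ℂ) (z : Fin n → ℂ) : ℂ :=
  4 * ∑ k, wderiv k (fun w => wderivBar k f w) z

/-- `f` is a polynomial in `z` and `z̄`. -/
def IsPolyZZbar {n : ℕ} (f : (Fin n → ℂ) → ℂ) : Prop :=
  ∃ Q : MvPolynomial ((Fin n) ⊕ (Fin n)) ℂ,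
    ∀ z, f z = MvPolynomial.eval (Sum.elim z (fun j => (starRingEnd ℂ) (z j))) Q

/-- `|z|²` as a complex number: `∑ z_k z̄_k`. -/
def nsq {n : ℕ} (z : Fin n → ℂ) : ℂ := ∑ k, z k * (starRingEnd ℂ) (z k)

/-- `f` is bigraded homogeneous of bidegree `(p,q)`:
`f(λz) = λ^p λ̄^q f(z)` for all `λ ∈ ℂ`. -/
def BiHomogeneous {n : ℕ} (p q : ℕ) (f : (Fin n → ℂ) → ℂ) : Prop :=
  ∀ (c : ℂ) (z : Fin n → ℂ), f (c • z) = c ^ p * (starRingEnd ℂ) c ^ q * f z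

/-- `f` belongs to `H_{p,q}`: a bigraded harmonic polynomial of bidegree `(p,q)`. -/
def IsBigradedHarmonic {n : ℕ} (p q : ℕ) (f : (Fin n → ℂ) → ℂ) : Prop :=
  IsPolyZZbar f ∧ BiHomogeneous p q f ∧ ∀ z, lap f z = 0

/-!
Read `P` and `Q` as formal polynomials in independent variables `z` and `z̄`; nothing is lost,
because the Wirtinger derivatives act as the formal partial derivatives and so detect every
coefficient. For harmonic `P` and `Q`, `Δ(PQ)` is, up to a constant factor, a sum of products
`∂ₖP · ∂̄ₖQ` and `∂̄ₖP · ∂ₖQ` of bigraded harmonic polynomials, which vanish or have a `ν` smaller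
by one; hence `Δ ^ (ν + 1)` kills `PQ`. A bihomogeneous polynomial killed by a power of `Δ` is
decomposed by Almansi's argument: for harmonic `R` of degree `d`, Euler's identity gives
`Δ(|z|^{2(j+1)} R) = 4 (j + 1) (n + d + j) |z|^{2j} R`, and for `n > 0` the constant can be
inverted.
-/

open MvPolynomial

section RingTheory

variable {σ R : Type*} [CommSemiring R]

theorem pderiv_comm (i j : σ) (f : MvPolynomial σ R) :
    pderiv i (pderiv j f) = pderiv j (pderiv i f) := by
  classical
  ext s
  simp only [coeff_pderiv, Finsupp.add_apply, Finsupp.single_apply, eq_comm (a := j),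
    add_right_comm s]
  split_ifs with h
  · rw [h]
  · push_cast; ring

theorem eq_zero_of_mem_of_pderiv_mem [NoZeroDivisors R] [CharZero R] {S : Set (MvPolynomial σ R)}
    (hS : ∀ f ∈ S, ∀ i, pderiv i f ∈ S) (h0 : ∀ f ∈ S, constantCoeff f = 0)
    {f : MvPolynomial σ R} (hf : f ∈ S) : f = 0 := by
  classical
  ext s
  rw [coeff_zero]
  induction hd : s.degree generalizing s f with
  | zero => rw [(Finsupp.degree_eq_zero_iff s).1 hd]; exact h0 f hf
  | succ d ih =>
    obtain ⟨i, hi⟩ : ∃ i, s i ≠ 0 := by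
      by_contra! h
      simp [Finsupp.ext (g := 0) h] at hd
    have hs := Finsupp.sub_add_single_one_cancel hi
    have hcoeff := ih (hS f hf i) (s := s - Finsupp.single i 1) <| by
      rw [← hs, map_add, Finsupp.degree_single] at hd
      omega
    rw [coeff_pderiv, hs] at hcoeff
    exact (mul_eq_zero.1 hcoeff).resolve_right (Nat.cast_add_one_ne_zero _)

variable {M : Type*} [AddCommMonoid M] {w : σ → M} {f : MvPolynomial σ R} {m : M}

theorem isWeightedHomogeneous_comp_addMonoidHom {N : Type*} [AddCommMonoid N] (φ : M →+ N)
    (hf : f.IsWeightedHomogeneous w m) :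
    f.IsWeightedHomogeneous (φ ∘ w) (φ m) := by
  intro s hs
  rw [← hf hs, Finsupp.weight_apply, Finsupp.weight_apply, map_finsuppSum]
  simp only [Function.comp_apply, map_nsmul]

theorem pderiv_eq_zero_of_isWeightedHomogeneous {i : σ}
    (hf : f.IsWeightedHomogeneous w m) (hi : ∀ m', m' + w i ≠ m) : pderiv i f = 0 := by
  ext s
  rw [coeff_pderiv, hf.coeff_eq_zero, zero_mul, coeff_zero]
  simpa [Finsupp.weight_single] using hi _

/-- The substitution `X i ↦ u i * X i`, the action of a diagonal matrix on polynomials. -/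
def rescale (u : σ → R) : MvPolynomial σ R →ₐ[R] MvPolynomial σ R :=
  bind₁ fun i => C (u i) * X i

theorem eval_rescale (u x : σ → R) (f : MvPolynomial σ R) :
    eval x (rescale u f) = eval (u * x) f := by
  simp only [rescale, eval, eval₂Hom_bind₁, map_mul, eval₂Hom_C, eval₂Hom_X', RingHom.id_apply]
  rfl

theorem coeff_rescale (u : σ → R) (s : σ →₀ ℕ) (f : MvPolynomial σ R) :
    coeff s (rescale u f) = (s.prod fun i k => u i ^ k) * coeff s f := by
  classical
  induction f using MvPolynomial.induction_on' with
  | add f g hf hg => rw [map_add, coeff_add, hf, hg, coeff_add, mul_add]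
  | monomial t a =>
    have hmonomial : rescale u (monomial t a) = C (t.prod fun i k => u i ^ k) * monomial t a := by
      rw [rescale, bind₁_monomial, monomial_eq]
      simp only [mul_pow, Finset.prod_mul_distrib, Finsupp.prod, map_prod, map_pow]
      ring
    rw [hmonomial, coeff_C_mul, coeff_monomial]
    split_ifs with h
    · rw [h]
    · simp only [mul_zero]

theorem coeff_rescale_character (χ : Multiplicative M →* R) (s : σ →₀ ℕ) :
    coeff s (rescale (fun i => χ (.ofAdd (w i))) f) =
      χ (.ofAdd (Finsupp.weight w s)) * coeff s f := by
  rw [coeff_rescale, Finsupp.weight_apply, Finsupp.sum, ofAdd_sum, map_prod]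
  simp only [ofAdd_nsmul, map_pow, Finsupp.prod]

theorem rescale_eq_of_isWeightedHomogeneous (χ : Multiplicative M →* R)
    (hf : f.IsWeightedHomogeneous w m) :
    rescale (fun i => χ (.ofAdd (w i))) f = C (χ (.ofAdd m)) * f := by
  ext s
  rw [coeff_rescale_character, coeff_C_mul]
  by_cases hs : coeff s f = 0
  · rw [hs, mul_zero, mul_zero]
  · rw [hf hs]

theorem isWeightedHomogeneous_of_rescale_eq [IsRightCancelMulZero R] {T : Type*}
    {χ : T → Multiplicative M →* R}
    (hχ : ∀ m m' : M, (∀ t, χ t (.ofAdd m) = χ t (.ofAdd m')) → m = m')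
    (h : ∀ t, rescale (fun i => χ t (.ofAdd (w i))) f = C (χ t (.ofAdd m)) * f) :
    f.IsWeightedHomogeneous w m := by
  intro s hs
  refine hχ _ _ fun t => mul_right_cancel₀ hs ?_
  rw [← coeff_rescale_character, h, coeff_C_mul]

end RingTheory

section Laplacian

variable {ι R : Type*} [CommSemiring R]

/-- The bidegree `(1, 0)` of the variables `z_k = X (inl k)` and `(0, 1)` of the variables
`z̄_k = X (inr k)`. -/
def bidegree : ι ⊕ ι → ℕ × ℕ := Sum.elim (fun _ => (1, 0)) fun _ => (0, 1)

theorem isHomogeneous_of_bidegree {a b : ℕ} {f : MvPolynomial (ι ⊕ ι) R}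
    (hf : f.IsWeightedHomogeneous bidegree (a, b)) : f.IsHomogeneous (a + b) := by
  have hsum : (AddMonoidHom.fst ℕ ℕ + AddMonoidHom.snd ℕ ℕ) ∘ bidegree = (1 : ι ⊕ ι → ℕ) := by
    ext (k | k) <;> rfl
  rw [IsHomogeneous, ← hsum]
  exact isWeightedHomogeneous_comp_addMonoidHom _ hf

theorem pderiv_inl_eq_zero_of_bidegree {q : ℕ} {f : MvPolynomial (ι ⊕ ι) R}
    (hf : f.IsWeightedHomogeneous bidegree (0, q)) (k : ι) :
    pderiv (Sum.inl k) f = 0 :=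
  pderiv_eq_zero_of_isWeightedHomogeneous hf fun d hd =>
    Nat.succ_ne_zero d.1 (congrArg Prod.fst hd)

theorem pderiv_inr_eq_zero_of_bidegree {p : ℕ} {f : MvPolynomial (ι ⊕ ι) R}
    (hf : f.IsWeightedHomogeneous bidegree (p, 0)) (k : ι) :
    pderiv (Sum.inr k) f = 0 :=
  pderiv_eq_zero_of_isWeightedHomogeneous hf fun d hd =>
    Nat.succ_ne_zero d.2 (congrArg Prod.snd hd)

variable [Fintype ι]

variable (ι R) in
/-- The polynomial `∑ k, z_k * z̄_k` representing `|z|²`. -/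
def polyNormSq : MvPolynomial (ι ⊕ ι) R := ∑ k, X (Sum.inl k) * X (Sum.inr k)

/-- The operator `∑ k, ∂²/∂z_k∂z̄_k` on polynomials in `z` and `z̄`: the Laplacian without its
factor `4`. -/
def polyLaplacian : MvPolynomial (ι ⊕ ι) R →ₗ[R] MvPolynomial (ι ⊕ ι) R :=
  ∑ k, (pderiv (Sum.inl k)).toLinearMap ∘ₗ (pderiv (Sum.inr k)).toLinearMap

theorem polyLaplacian_apply (f : MvPolynomial (ι ⊕ ι) R) :
    polyLaplacian f = ∑ k, pderiv (Sum.inl k) (pderiv (Sum.inr k) f) := by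
  simp only [polyLaplacian, LinearMap.sum_apply, LinearMap.comp_apply, Derivation.coeFn_coe]

theorem polyLaplacian_pderiv (i : ι ⊕ ι) (f : MvPolynomial (ι ⊕ ι) R) :
    polyLaplacian (pderiv i f) = pderiv i (polyLaplacian f) := by
  simp only [polyLaplacian_apply, map_sum, pderiv_comm i]

theorem polyLaplacian_mul (f g : MvPolynomial (ι ⊕ ι) R) :
    polyLaplacian (f * g) = polyLaplacian f * g + f * polyLaplacian g +
      (∑ k, pderiv (Sum.inl k) f * pderiv (Sum.inr k) g +
        ∑ k, pderiv (Sum.inl k) g * pderiv (Sum.inr k) f) := by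
  simp only [polyLaplacian_apply, Finset.sum_mul, Finset.mul_sum, ← Finset.sum_add_distrib,
    pderiv_mul, map_add]
  exact Finset.sum_congr rfl fun k _ => by ring

theorem isWeightedHomogeneous_polyNormSq :
    (polyNormSq ι R).IsWeightedHomogeneous bidegree (1, 1) :=
  IsWeightedHomogeneous.sum _ _ _ fun k _ =>
    (isWeightedHomogeneous_X R bidegree (Sum.inl k)).mul
      (isWeightedHomogeneous_X R bidegree (Sum.inr k))

theorem isWeightedHomogeneous_polyNormSq_pow_mul {a b : ℕ} {f : MvPolynomial (ι ⊕ ι) R}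
    (hf : f.IsWeightedHomogeneous bidegree (a, b)) (j : ℕ) :
    (polyNormSq ι R ^ j * f).IsWeightedHomogeneous bidegree (a + j, b + j) := by
  simpa [add_comm j] using (isWeightedHomogeneous_polyNormSq.pow j).mul hf

theorem pderiv_inl_polyNormSq (k : ι) :
    pderiv (Sum.inl k) (polyNormSq ι R) = X (Sum.inr k) := by
  classical
  simp [polyNormSq, Pi.single_apply]

theorem pderiv_inr_polyNormSq (k : ι) :
    pderiv (Sum.inr k) (polyNormSq ι R) = X (Sum.inl k) := by
  classical
  simp [polyNormSq, Pi.single_apply]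

theorem polyLaplacian_polyNormSq : polyLaplacian (polyNormSq ι R) = Fintype.card ι := by
  simp [polyLaplacian_apply, pderiv_inr_polyNormSq]

theorem polyLaplacian_polyNormSq_mul {d : ℕ} {f : MvPolynomial (ι ⊕ ι) R}
    (hf : f.IsHomogeneous d) :
    polyLaplacian (polyNormSq ι R * f) =
      polyNormSq ι R * polyLaplacian f + (Fintype.card ι + d) • f := by
  have euler := hf.sum_X_mul_pderiv
  rw [Fintype.sum_sum_type] at euler
  rw [polyLaplacian_mul, polyLaplacian_polyNormSq, add_smul, ← euler]
  simp only [pderiv_inl_polyNormSq, pderiv_inr_polyNormSq, mul_comm (pderiv _ f), nsmul_eq_mul]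
  ring

theorem polyLaplacian_polyNormSq_pow_mul {d : ℕ} {f : MvPolynomial (ι ⊕ ι) R}
    (hf : f.IsHomogeneous d) (hf0 : polyLaplacian f = 0) (j : ℕ) :
    polyLaplacian (polyNormSq ι R ^ (j + 1) * f) =
      ((j + 1) * (Fintype.card ι + d + j)) • (polyNormSq ι R ^ j * f) := by
  have hρ : (polyNormSq ι R).IsHomogeneous 2 :=
    isHomogeneous_of_bidegree isWeightedHomogeneous_polyNormSq
  induction j with
  | zero => simp [polyLaplacian_polyNormSq_mul hf, hf0]
  | succ j ih =>
    rw [pow_succ', mul_assoc, polyLaplacian_polyNormSq_mul ((hρ.pow (j + 1)).mul hf), ih,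
      mul_smul_comm, ← mul_assoc, ← pow_succ', ← add_smul]
    congr 1
    ring

end Laplacian

section BigradedHarmonic

variable (ι R : Type*) [Fintype ι] [CommSemiring R]

/-- The space `H_{p,q}` of harmonic polynomials of bidegree `(p, q)`, as formal polynomials in the
independent variables `z = X ∘ inl` and `z̄ = X ∘ inr`. -/
def bigradedHarmonic (p q : ℕ) : Submodule R (MvPolynomial (ι ⊕ ι) R) :=
  weightedHomogeneousSubmodule R bidegree (p, q) ⊓ LinearMap.ker polyLaplacian

variable {ι R} {p q l m : ℕ} {f g : MvPolynomial (ι ⊕ ι) R}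

theorem mem_bigradedHarmonic :
    f ∈ bigradedHarmonic ι R p q ↔
      f.IsWeightedHomogeneous bidegree (p, q) ∧ polyLaplacian f = 0 := Iff.rfl

theorem pderiv_inl_mem_bigradedHarmonic (hf : f ∈ bigradedHarmonic ι R (p + 1) q) (k : ι) :
    pderiv (Sum.inl k) f ∈ bigradedHarmonic ι R p q :=
  mem_bigradedHarmonic.2 ⟨hf.1.pderiv rfl, by rw [polyLaplacian_pderiv, hf.2, map_zero]⟩

theorem pderiv_inr_mem_bigradedHarmonic (hf : f ∈ bigradedHarmonic ι R p (q + 1)) (k : ι) :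
    pderiv (Sum.inr k) f ∈ bigradedHarmonic ι R p q :=
  mem_bigradedHarmonic.2 ⟨hf.1.pderiv rfl, by rw [polyLaplacian_pderiv, hf.2, map_zero]⟩

theorem polyLaplacian_pow_mul_eq_zero {N : ℕ} (hf : f ∈ bigradedHarmonic ι R p q)
    (hg : g ∈ bigradedHarmonic ι R l m) (hN : min p m + min l q < N) :
    (polyLaplacian ^ N) (f * g) = 0 := by
  induction N generalizing p q l m f g with
  | zero => exact absurd hN (Nat.not_lt_zero _)
  | succ N ih =>
    have cross_eq_zero {p q l m : ℕ} {f g : MvPolynomial (ι ⊕ ι) R}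
        (hf : f ∈ bigradedHarmonic ι R p q) (hg : g ∈ bigradedHarmonic ι R l m)
        (hN : min p m + min l q < N + 1) (k : ι) :
        (polyLaplacian ^ N) (pderiv (Sum.inl k) f * pderiv (Sum.inr k) g) = 0 := by
      rcases p with _ | p
      · rw [pderiv_inl_eq_zero_of_bidegree hf.1, zero_mul, map_zero]
      rcases m with _ | m
      · rw [pderiv_inr_eq_zero_of_bidegree hg.1, mul_zero, map_zero]
      exact ih (pderiv_inl_mem_bigradedHarmonic hf k) (pderiv_inr_mem_bigradedHarmonic hg k)
        (by omega)
    rw [pow_succ, Module.End.mul_apply, polyLaplacian_mul, hf.2, hg.2]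
    simp only [zero_mul, mul_zero, zero_add, map_add, map_sum, cross_eq_zero hf hg hN,
      cross_eq_zero hg hf (by omega), Finset.sum_const_zero]

end BigradedHarmonic

section Almansi

variable {ι K : Type*} [Fintype ι] [Field K] [CharZero K]

theorem exists_polyLaplacian_polyNormSq_pow_mul_eq [Nonempty ι] {a b : ℕ}
    {r : MvPolynomial (ι ⊕ ι) K} (hr : r ∈ bigradedHarmonic ι K a b) (j : ℕ) :
    ∃ s ∈ bigradedHarmonic ι K a b,
      polyLaplacian (polyNormSq ι K ^ (j + 1) * s) = polyNormSq ι K ^ j * r := by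
  set c : ℕ := (j + 1) * (Fintype.card ι + (a + b) + j)
  have hc : (c : K) ≠ 0 := by
    have := Fintype.card_pos (α := ι)
    exact Nat.cast_ne_zero.2 (by positivity)
  refine ⟨(c : K)⁻¹ • r, Submodule.smul_mem _ _ hr, ?_⟩
  rw [mul_smul_comm, map_smul,
    polyLaplacian_polyNormSq_pow_mul (isHomogeneous_of_bidegree hr.1) hr.2,
    ← Nat.cast_smul_eq_nsmul K, inv_smul_smul₀ hc]

theorem exists_eq_sum_polyNormSq_pow_mul [Nonempty ι] {k a b : ℕ} (ha : k ≤ a) (hb : k ≤ b)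
    {f : MvPolynomial (ι ⊕ ι) K} (hf : f.IsWeightedHomogeneous bidegree (a, b))
    (hΔ : (polyLaplacian ^ (k + 1)) f = 0) :
    ∃ r : ℕ → MvPolynomial (ι ⊕ ι) K, (∀ j ≤ k, r j ∈ bigradedHarmonic ι K (a - j) (b - j)) ∧
      f = ∑ j ∈ Finset.range (k + 1), polyNormSq ι K ^ j * r j := by
  induction k generalizing a b f with
  | zero =>
    rw [zero_add, pow_one] at hΔ
    refine ⟨fun _ => f, fun j hj => ?_, by simp⟩
    rw [Nat.le_zero.1 hj]
    exact ⟨hf, hΔ⟩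
  | succ k ih =>
    obtain ⟨a, rfl⟩ := Nat.exists_eq_add_of_le' (Nat.one_le_of_lt ha)
    obtain ⟨b, rfl⟩ := Nat.exists_eq_add_of_le' (Nat.one_le_of_lt hb)
    have hΔf : (polyLaplacian f).IsWeightedHomogeneous bidegree (a, b) := by
      rw [polyLaplacian_apply]
      exact IsWeightedHomogeneous.sum _ _ _ fun i _ =>
        (hf.pderiv (n' := (a + 1, b)) rfl).pderiv rfl
    rw [pow_succ, Module.End.mul_apply] at hΔ
    obtain ⟨r, hr, hr_sum⟩ := ih (by omega) (by omega) hΔf hΔ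
    choose! s hs hΔs using fun j hj => exists_polyLaplacian_polyNormSq_pow_mul_eq (hr j hj) j
    set F := ∑ j ∈ Finset.range (k + 1), polyNormSq ι K ^ (j + 1) * s j with hF
    have hF_hom : F.IsWeightedHomogeneous bidegree (a + 1, b + 1) := by
      refine IsWeightedHomogeneous.sum _ _ _ fun j hj => ?_
      have hj := Finset.mem_range_succ_iff.1 hj
      convert isWeightedHomogeneous_polyNormSq_pow_mul (hs j hj).1 (j + 1) using 2 <;> omega
    have hF_Δ : polyLaplacian F = polyLaplacian f := by
      rw [hr_sum, hF, map_sum]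
      exact Finset.sum_congr rfl fun j hj => hΔs j (Finset.mem_range_succ_iff.1 hj)
    refine ⟨fun j => j.casesOn (f - F) s, fun j hj => ?_, ?_⟩
    · cases j with
      | zero =>
        have hΔ_sub : polyLaplacian (f - F) = 0 := by rw [map_sub, hF_Δ, sub_self]
        exact ⟨hf.sub hF_hom, hΔ_sub⟩
      | succ j => simpa only [Nat.add_sub_add_right] using hs j (by omega)
    · rw [Finset.sum_range_succ']
      simp [← hF]

theorem exists_mul_eq_sum_polyNormSq_pow_mul {p q l m : ℕ} {f g : MvPolynomial (ι ⊕ ι) K}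
    (hf : f ∈ bigradedHarmonic ι K p q) (hg : g ∈ bigradedHarmonic ι K l m) :
    ∃ r : ℕ → MvPolynomial (ι ⊕ ι) K,
      (∀ j ≤ min p m + min l q, r j ∈ bigradedHarmonic ι K (p + l - j) (q + m - j)) ∧
        f * g = ∑ j ∈ Finset.range (min p m + min l q + 1), polyNormSq ι K ^ j * r j := by
  have hfg : (f * g).IsWeightedHomogeneous bidegree (p + l, q + m) := hf.1.mul hg.1
  cases isEmpty_or_nonempty ι with
  | inl _ =>
    refine ⟨fun j => j.casesOn (f * g) 0, fun j _ => ?_, by simp [Finset.sum_range_succ']⟩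
    cases j with
    | zero => exact ⟨hfg, by simp [polyLaplacian_apply]⟩
    | succ j => exact Submodule.zero_mem _
  | inr _ =>
    exact exists_eq_sum_polyNormSq_pow_mul (by omega) (by omega) hfg
      (polyLaplacian_pow_mul_eq_zero hf hg (Nat.lt_succ_self _))

end Almansi

theorem hasFDerivAt_eval_comp {σ 𝕜 E A : Type*} [Fintype σ] [NontriviallyNormedField 𝕜]
    [NormedAddCommGroup E] [NormedSpace 𝕜 E] [NormedCommRing A] [NormedAlgebra 𝕜 A]
    {x : E} {g : E → σ → A} {g' : σ → E →L[𝕜] A} (hg : ∀ i, HasFDerivAt (fun y => g y i) (g' i) x)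
    (f : MvPolynomial σ A) :
    HasFDerivAt (fun y => eval (g y) f) (∑ i, eval (g x) (pderiv i f) • g' i) x := by
  classical
  induction f using MvPolynomial.induction_on with
  | C a =>
    simp only [eval_C]
    refine (hasFDerivAt_const a x).congr_fderiv ?_
    ext v
    simp
  | add f₁ f₂ h₁ h₂ =>
    simp only [map_add]
    refine (h₁.add h₂).congr_fderiv ?_
    ext v
    simp [add_mul, Finset.sum_add_distrib]
  | mul_X f i hf =>
    simp only [map_mul, eval_X]
    refine (hf.mul (hg i)).congr_fderiv ?_
    ext v
    simp [add_mul, mul_assoc, Finset.sum_add_distrib, Finset.mul_sum, Pi.single_apply,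
      apply_ite (eval (g x))]

section Conj

/-- The point `(z, z̄)`, so that `eval (withConj z) f` is the value at `z` of the polynomial `f` in
`z` and `z̄`. -/
def withConj {ι : Type*} (z : ι → ℂ) : ι ⊕ ι → ℂ := Sum.elim z fun k => (starRingEnd ℂ) (z k)

theorem eval_withConj_polyNormSq {n : ℕ} (z : Fin n → ℂ) :
    eval (withConj z) (polyNormSq (Fin n) ℂ) = nsq z := by
  simp [polyNormSq, nsq, withConj]

theorem fderiv_eval_withConj_single {ι : Type*} [Finite ι] [DecidableEq ι]
    (f : MvPolynomial (ι ⊕ ι) ℂ) (z : ι → ℂ) (k : ι) (c : ℂ) :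
    fderiv ℝ (fun w => eval (withConj w) f) z (Pi.single k c) =
      eval (withConj z) (pderiv (Sum.inl k) f) * c +
        eval (withConj z) (pderiv (Sum.inr k) f) * (starRingEnd ℂ) c := by
  cases nonempty_fintype ι
  let coord (k : ι) : (ι → ℂ) →L[ℝ] ℂ := ContinuousLinearMap.proj k
  let L : ι ⊕ ι → (ι → ℂ) →L[ℝ] ℂ := Sum.elim coord fun k => (conjCLE : ℂ →L[ℝ] ℂ).comp (coord k)
  have hL : ∀ i, HasFDerivAt (fun w => withConj w i) (L i) z := by
    rintro (k | k)
    · exact (L (Sum.inl k)).hasFDerivAt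
    · exact (L (Sum.inr k)).hasFDerivAt
  rw [(hasFDerivAt_eval_comp hL f).fderiv]
  simp [L, coord, Pi.single_apply, apply_ite (starRingEnd ℂ)]

variable {n : ℕ}

theorem wderiv_eval_withConj (f : MvPolynomial (Fin n ⊕ Fin n) ℂ) (k : Fin n) (z : Fin n → ℂ) :
    wderiv k (fun w => eval (withConj w) f) z = eval (withConj z) (pderiv (Sum.inl k) f) := by
  simp only [wderiv, fderiv_eval_withConj_single, map_one, conj_I]
  linear_combination (eval (withConj z) (pderiv (Sum.inr k) f) -
    eval (withConj z) (pderiv (Sum.inl k) f)) / 2 * I_sq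

theorem wderivBar_eval_withConj (f : MvPolynomial (Fin n ⊕ Fin n) ℂ) (k : Fin n) (z : Fin n → ℂ) :
    wderivBar k (fun w => eval (withConj w) f) z = eval (withConj z) (pderiv (Sum.inr k) f) := by
  simp only [wderivBar, fderiv_eval_withConj_single, map_one, conj_I]
  linear_combination (eval (withConj z) (pderiv (Sum.inl k) f) -
    eval (withConj z) (pderiv (Sum.inr k) f)) / 2 * I_sq

theorem lap_eval_withConj (f : MvPolynomial (Fin n ⊕ Fin n) ℂ) (z : Fin n → ℂ) :
    lap (fun w => eval (withConj w) f) z = 4 * eval (withConj z) (polyLaplacian f) := by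
  simp only [lap, wderivBar_eval_withConj, wderiv_eval_withConj, polyLaplacian_apply, map_sum]

theorem eq_zero_of_eval_withConj_eq_zero {f : MvPolynomial (Fin n ⊕ Fin n) ℂ}
    (hf : ∀ z, eval (withConj z) f = 0) : f = 0 := by
  refine eq_zero_of_mem_of_pderiv_mem (S := {f | ∀ z, eval (withConj z) f = 0})
    (fun f hf i z => ?_) (fun f hf => ?_) hf
  · have hf : (fun w => eval (withConj w) f) = 0 := funext hf
    rcases i with k | k
    · rw [← wderiv_eval_withConj, hf]
      simp [wderiv]
    · rw [← wderivBar_eval_withConj, hf]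
      simp [wderivBar]
  · have hzero : withConj (0 : Fin n → ℂ) = 0 := by ext (k | k) <;> simp [withConj]
    rw [← eval_zero, ← hzero]
    exact hf 0

theorem eq_of_pow_mul_conj_pow_eq {d e : ℕ × ℕ}
    (h : ∀ c : ℂ, c ^ d.1 * (starRingEnd ℂ) c ^ d.2 = c ^ e.1 * (starRingEnd ℂ) c ^ e.2) :
    d = e := by
  -- Distinct monomials in the independent variables `c` and `c̄` are distinct functions of `c`.
  have hX : (X (Sum.inl 0) ^ d.1 * X (Sum.inr 0) ^ d.2 : MvPolynomial (Fin 1 ⊕ Fin 1) ℂ) =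
      X (Sum.inl 0) ^ e.1 * X (Sum.inr 0) ^ e.2 := by
    refine sub_eq_zero.1 (eq_zero_of_eval_withConj_eq_zero fun z => ?_)
    simpa [withConj] using sub_eq_zero.2 (h (z 0))
  simp only [X_pow_eq_monomial, monomial_mul, mul_one] at hX
  have hexp := DFunLike.congr_fun (monomial_left_injective one_ne_zero hX)
  exact Prod.ext (by simpa using hexp (Sum.inl 0)) (by simpa using hexp (Sum.inr 0))

/-- The character `(a, b) ↦ c ^ a * c̄ ^ b` of the additive monoid of bidegrees. -/
def bidegreeCharacter (c : ℂ) : Multiplicative (ℕ × ℕ) →* ℂ where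
  toFun d := c ^ d.toAdd.1 * (starRingEnd ℂ) c ^ d.toAdd.2
  map_one' := by simp
  map_mul' d e := by simp only [toAdd_mul, Prod.fst_add, Prod.snd_add, pow_add]; ring

theorem eval_withConj_smul (f : MvPolynomial (Fin n ⊕ Fin n) ℂ) (c : ℂ) (z : Fin n → ℂ) :
    eval (withConj (c • z)) f =
      eval (withConj z) (rescale (fun i => bidegreeCharacter c (.ofAdd (bidegree i))) f) := by
  rw [eval_rescale]
  congr 2
  ext (k | k) <;> simp [withConj, bidegreeCharacter, bidegree]

theorem biHomogeneous_eval_withConj_iff {a b : ℕ} {f : MvPolynomial (Fin n ⊕ Fin n) ℂ} :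
    BiHomogeneous a b (fun z => eval (withConj z) f) ↔
      f.IsWeightedHomogeneous bidegree (a, b) := by
  constructor
  · intro h
    refine isWeightedHomogeneous_of_rescale_eq (χ := bidegreeCharacter)
      (fun _ _ => eq_of_pow_mul_conj_pow_eq) fun c => ?_
    refine sub_eq_zero.1 (eq_zero_of_eval_withConj_eq_zero fun z => ?_)
    rw [map_sub, ← eval_withConj_smul, map_mul, eval_C]
    exact sub_eq_zero.2 (h c z)
  · intro hf c z
    dsimp only
    rw [eval_withConj_smul, rescale_eq_of_isWeightedHomogeneous _ hf, map_mul, eval_C]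
    rfl

theorem isBigradedHarmonic_eval_withConj_iff {p q : ℕ} {f : MvPolynomial (Fin n ⊕ Fin n) ℂ} :
    IsBigradedHarmonic p q (fun z => eval (withConj z) f) ↔
      f ∈ bigradedHarmonic (Fin n) ℂ p q := by
  have hlap : (∀ z, lap (fun w => eval (withConj w) f) z = 0) ↔ polyLaplacian f = 0 := by
    simp only [lap_eval_withConj, mul_eq_zero, OfNat.ofNat_ne_zero, false_or]
    exact ⟨eq_zero_of_eval_withConj_eq_zero, fun h z => by rw [h, map_zero]⟩
  have hpoly : IsPolyZZbar (fun z => eval (withConj z) f) := ⟨f, fun _ => rfl⟩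
  rw [IsBigradedHarmonic, biHomogeneous_eval_withConj_iff, hlap, mem_bigradedHarmonic,
    and_iff_right hpoly]

end Conj

theorem stmt5 {n : ℕ} (p q l m : ℕ) (P Q : (Fin n → ℂ) → ℂ)
    (hP : IsBigradedHarmonic p q P) (hQ : IsBigradedHarmonic l m Q) :
    ∃ R : ℕ → ((Fin n → ℂ) → ℂ),
      (∀ j ≤ min p m + min l q, IsBigradedHarmonic (p + l - j) (q + m - j) (R j)) ∧
        ∀ z, P z * Q z = ∑ j ∈ Finset.range (min p m + min l q + 1), nsq z ^ j * R j z := by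
  obtain ⟨f, hf⟩ := hP.1
  obtain ⟨g, hg⟩ := hQ.1
  obtain rfl : P = fun z => eval (withConj z) f := funext hf
  obtain rfl : Q = fun z => eval (withConj z) g := funext hg
  rw [isBigradedHarmonic_eval_withConj_iff] at hP hQ
  obtain ⟨r, hr, hfg⟩ := exists_mul_eq_sum_polyNormSq_pow_mul hP hQ
  refine ⟨fun j z => eval (withConj z) (r j),
    fun j hj => isBigradedHarmonic_eval_withConj_iff.2 (hr j hj), fun z => ?_⟩
  simpa only [map_mul, map_sum, map_pow, eval_withConj_polyNormSq] using
    congrArg (eval (withConj z)) hfg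
end
end

section
/- Let g(z) = ρ^{k−d−2i} Y_k(ω) on ℝ^d ∖ B̄_B(0), where z = ρω, Y_k is a spherical harmonic of degree k > 0 on S^{d−1}, and 0 ≤ i ≤ k−1. Then the Euclidean spherical means of g vanish: ∫_{|y|=s} g(x+y) dσ_s(y) = 0 whenever s > |x| + B. -/
open MeasureTheory

noncomputable section

/-- Normalized surface measure on the sphere of radius `s` centered at the origin in ℝ^d. -/
def sphMeasR (d : ℕ) (s : ℝ) : Measure (EuclideanSpace ℝ (Fin d)) :=
  (μH[d - 1] (Metric.sphere (0 : EuclideanSpace ℝ (Fin d)) s))⁻¹ •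
    (μH[d - 1]).restrict (Metric.sphere (0 : EuclideanSpace ℝ (Fin d)) s)

/-- The Euclidean Laplacian on ℝ^d as the sum of second directional derivatives
along the standard orthonormal basis. -/
def lapR {d : ℕ} (f : EuclideanSpace ℝ (Fin d) → ℝ) (x : EuclideanSpace ℝ (Fin d)) : ℝ :=
  ∑ i, fderiv ℝ (fun w => fderiv ℝ f w (EuclideanSpace.single i (1 : ℝ))) x
      (EuclideanSpace.single i (1 : ℝ))

/-!
Since the sphere of radius `s > ‖x‖` about `x` encloses the origin, the mean of `g` over it can be
written in polar coordinates about the origin: up to a factor depending only on `s` it is the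
integral over unit vectors `w` of `g (ρ w) * ρ ^ (d - 1) / q`, where `q² = ⟪x, w⟫² + s² - ‖x‖²` and
`ρ = ⟪x, w⟫ + q` is the distance from the origin to the sphere in direction `w`. For
`g (ρ w) = ρ ^ (k - d - 2 i) * Y w` the integrand is `ρ ^ m / q * Y w` with `m = k - 1 - 2 i`, so
`|m| < k` and `k + m` is odd.

Passing from `w` to `-w` replaces `ρ` by `q - ⟪x, w⟫ = (s² - ‖x‖²) / ρ` and multiplies `Y` by
`(-1) ^ k`. Hence negative `m` reduce to positive ones, and for positive `m` averaging over `±w`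
turns `ρ ^ m / q` into a polynomial in `⟪x, w⟫` of degree less than `m`. Such polynomials are
orthogonal to `Y` on the sphere: in Gaussian space the Ornstein–Uhlenbeck operator `Δ - z · ∇` is
self-adjoint, `Y` is an eigenfunction of it for the eigenvalue `-k`, and on powers of `⟪x, z⟫` it is
triangular with eigenvalues `-j`.
-/

open Set Metric Module Filter Topology InnerProductSpace
open scoped RealInnerProductSpace Pointwise Laplacian

section Polar

variable {E : Type*} [NormedAddCommGroup E] [NormedSpace ℝ E] [FiniteDimensional ℝ E]
  [MeasurableSpace E] [BorelSpace E]
  {F : Type*} [NormedAddCommGroup F] [NormedSpace ℝ F]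

lemma integral_volumeIoiPow (n : ℕ) (f : ℝ → F) :
    ∫ r : Ioi (0 : ℝ), f r ∂(Measure.volumeIoiPow n) = ∫ r in Ioi (0 : ℝ), r ^ n • f r := by
  simp only [Measure.volumeIoiPow, ENNReal.ofReal]
  rw [integral_withDensity_eq_integral_smul (measurable_subtype_coe.pow_const _).real_toNNReal,
    integral_subtype_comap measurableSet_Ioi fun r ↦ Real.toNNReal (r ^ n) • f r]
  refine setIntegral_congr_fun measurableSet_Ioi fun r (hr : 0 < r) ↦ ?_
  simp only [NNReal.smul_def, Real.coe_toNNReal _ (pow_nonneg hr.le n)]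

lemma measurableEmbedding_polarCoord_symm :
    MeasurableEmbedding (fun p : sphere (0 : E) 1 × Ioi (0 : ℝ) ↦ (p.2 : ℝ) • (p.1 : E)) :=
  (MeasurableEmbedding.subtype_coe (measurableSet_singleton (0 : E)).compl).comp
    (homeomorphUnitSphereProd E).symm.measurableEmbedding

variable [Nontrivial E] (μ : Measure E) [μ.IsAddHaarMeasure] {f : E → F}

lemma measurePreserving_polarCoord_symm :
    MeasurePreserving (fun p : sphere (0 : E) 1 × Ioi (0 : ℝ) ↦ (p.2 : ℝ) • (p.1 : E))
      (μ.toSphere.prod (.volumeIoiPow (finrank ℝ E - 1))) μ := by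
  have hval : MeasurePreserving (Subtype.val : ({0}ᶜ : Set E) → E) (μ.comap (↑)) μ := by
    simpa only [restrict_compl_singleton] using
      measurePreserving_subtype_coe (μa := μ) (measurableSet_singleton (0 : E)).compl
  exact hval.comp <| μ.measurePreserving_homeomorphUnitSphereProd.symm
    (homeomorphUnitSphereProd E).toMeasurableEquiv

lemma integral_eq_integral_sphere_integral_Ioi (hf : Integrable f μ) :
    ∫ z, f z ∂μ =
      ∫ w : sphere (0 : E) 1, (∫ r in Ioi (0 : ℝ), r ^ (finrank ℝ E - 1) • f (r • (w : E)))
        ∂μ.toSphere := by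
  have hpolar := measurePreserving_polarCoord_symm μ
  rw [← hpolar.integral_comp measurableEmbedding_polarCoord_symm,
    ← Function.comp_def f,
    integral_prod _ ((hpolar.integrable_comp_emb measurableEmbedding_polarCoord_symm).2 hf)]
  exact integral_congr_ae <| .of_forall fun w ↦ integral_volumeIoiPow _ fun r ↦ f (r • (w : E))

lemma integral_eq_integral_Ioi_integral_sphere (hf : Integrable f μ) :
    ∫ z, f z ∂μ =
      ∫ r in Ioi (0 : ℝ),
        r ^ (finrank ℝ E - 1) • ∫ w : sphere (0 : E) 1, f (r • (w : E)) ∂μ.toSphere := by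
  have hpolar := measurePreserving_polarCoord_symm μ
  rw [← hpolar.integral_comp measurableEmbedding_polarCoord_symm, ← Function.comp_def f,
    integral_prod_symm _ ((hpolar.integrable_comp_emb measurableEmbedding_polarCoord_symm).2 hf)]
  exact integral_volumeIoiPow _ fun r ↦ ∫ w, f (r • (w : E)) ∂μ.toSphere

lemma setIntegral_eq_integral_sphere_intervalIntegral {A : Set E} (hA : MeasurableSet A)
    (hf : IntegrableOn f A μ) {a b : sphere (0 : E) 1 → ℝ} (ha : ∀ w, 0 ≤ a w)
    (hab : ∀ w, a w ≤ b w)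
    (hmem : ∀ (w : sphere (0 : E) 1) (r : ℝ), 0 < r → (r • (w : E) ∈ A ↔ r ∈ Ioc (a w) (b w))) :
    ∫ z in A, f z ∂μ =
      ∫ w, (∫ r in a w..b w, r ^ (finrank ℝ E - 1) • f (r • (w : E))) ∂μ.toSphere := by
  rw [← integral_indicator hA,
    integral_eq_integral_sphere_integral_Ioi μ ((integrable_indicator_iff hA).2 hf)]
  refine integral_congr_ae <| .of_forall fun w ↦ ?_
  have hIoc : Ioc (a w) (b w) ⊆ Ioi 0 := fun r hr ↦ (ha w).trans_lt hr.1
  dsimp only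
  rw [intervalIntegral.integral_of_le (hab w), ← inter_eq_self_of_subset_right hIoc,
    ← setIntegral_indicator measurableSet_Ioc]
  refine setIntegral_congr_fun measurableSet_Ioi fun r hr ↦ ?_
  by_cases h : r ∈ Ioc (a w) (b w) <;> simp [h, hmem w r hr, indicator]

lemma setIntegral_norm_mem_Ioc {u v : ℝ} (hu : 0 ≤ u) (huv : u ≤ v)
    (hf : IntegrableOn f {z | ‖z‖ ∈ Ioc u v} μ) :
    ∫ z in {z | ‖z‖ ∈ Ioc u v}, f z ∂μ =
      ∫ r in u..v, r ^ (finrank ℝ E - 1) • ∫ w : sphere (0 : E) 1, f (r • (w : E)) ∂μ.toSphere := by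
  have hA : MeasurableSet {z : E | ‖z‖ ∈ Ioc u v} := measurable_norm measurableSet_Ioc
  have hIoc : Ioc u v ⊆ Ioi 0 := fun r hr ↦ hu.trans_lt hr.1
  rw [← integral_indicator hA,
    integral_eq_integral_Ioi_integral_sphere μ ((integrable_indicator_iff hA).2 hf),
    intervalIntegral.integral_of_le huv, ← inter_eq_self_of_subset_right hIoc,
    ← setIntegral_indicator measurableSet_Ioc]
  refine setIntegral_congr_fun measurableSet_Ioi fun r (hr : 0 < r) ↦ ?_
  by_cases h : r ∈ Ioc u v <;> simp [h, hr, indicator, norm_smul, abs_of_pos]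

end Polar

section Rotation

variable {E : Type*} [NormedAddCommGroup E] [InnerProductSpace ℝ E] [MeasurableSpace E]
  [BorelSpace E] {μ ν : Measure E} {s : ℝ}

lemma charFun_eq_of_norm_eq (hμ : ∀ A : E ≃ₗᵢ[ℝ] E, MeasurePreserving A μ μ) {a b : E}
    (hab : ‖a‖ = ‖b‖) : charFun μ a = charFun μ b := by
  let A : E ≃ₗᵢ[ℝ] E := (ℝ ∙ (a - b))ᗮ.reflection
  have hA : A a = b := Submodule.reflection_sub hab
  calc charFun μ a = ∫ y, Complex.exp (⟪A y, b⟫ * Complex.I) ∂μ := by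
        simp only [charFun_apply, ← hA, LinearIsometryEquiv.inner_map_map]
    _ = charFun μ b := by
        rw [(hμ A).integral_comp A.toHomeomorph.measurableEmbedding fun y ↦
          Complex.exp (⟪y, b⟫ * Complex.I), charFun_apply]

lemma integral_charFun_smul_of_norm_eq [IsFiniteMeasure μ] [IsFiniteMeasure ν]
    (hν : ∀ A : E ≃ₗᵢ[ℝ] E, MeasurePreserving A ν ν) (hs : 0 < s) (hμs : ∀ᵐ y ∂μ, ‖y‖ = s)
    (t : E) :
    ∫ y, charFun ν ((‖t‖ / s) • y) ∂μ = μ.real univ * charFun ν t := by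
  have hconst : ∀ᵐ y ∂μ, charFun ν ((‖t‖ / s) • y) = charFun ν t := by
    filter_upwards [hμs] with y hy
    refine charFun_eq_of_norm_eq hν ?_
    rw [norm_smul, hy, Real.norm_of_nonneg (by positivity), div_mul_cancel₀ _ hs.ne']
  rw [integral_congr_ae hconst, integral_const, Complex.real_smul]

lemma integral_charFun_smul_comm [SecondCountableTopology E] [IsFiniteMeasure μ] [IsFiniteMeasure ν]
    (r : ℝ) :
    ∫ y, charFun ν (r • y) ∂μ = ∫ y, charFun μ (r • y) ∂ν := by
  have hint : Integrable (fun p : E × E ↦ Complex.exp (⟪p.2, r • p.1⟫ * Complex.I))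
      (μ.prod ν) := by
    refine .of_bound (Continuous.aestronglyMeasurable (by fun_prop)) 1 (.of_forall fun p ↦ ?_)
    rw [Complex.norm_exp_ofReal_mul_I]
  simp only [charFun_apply]
  rw [integral_integral_swap hint]
  simp only [inner_smul_right, real_inner_comm]

/- Both double integrals of `exp (i r ⟪x, y⟫)` have a constant inner integral: on a sphere, the
characteristic function of a rotation invariant measure depends on the norm alone. -/
theorem smul_eq_smul_of_measurePreserving_of_norm_eq [SecondCountableTopology E] [CompleteSpace E]
    [IsFiniteMeasure μ] [IsFiniteMeasure ν]
    (hμ : ∀ A : E ≃ₗᵢ[ℝ] E, MeasurePreserving A μ μ)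
    (hν : ∀ A : E ≃ₗᵢ[ℝ] E, MeasurePreserving A ν ν)
    (hs : 0 < s) (hμs : ∀ᵐ y ∂μ, ‖y‖ = s) (hνs : ∀ᵐ y ∂ν, ‖y‖ = s) :
    μ univ • ν = ν univ • μ := by
  have := ν.smul_finite (measure_ne_top μ univ)
  have := μ.smul_finite (measure_ne_top ν univ)
  refine Measure.ext_of_charFun (funext fun t ↦ ?_)
  have key : (μ.real univ : ℂ) * charFun ν t = ν.real univ * charFun μ t := by
    rw [← integral_charFun_smul_of_norm_eq hν hs hμs, integral_charFun_smul_comm,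
      integral_charFun_smul_of_norm_eq hμ hs hνs]
  simpa only [charFun_apply, integral_smul_measure, Complex.real_smul, Measure.real] using key

lemma measurePreserving_map_smul (hμ : ∀ A : E ≃ₗᵢ[ℝ] E, MeasurePreserving A μ μ) (r : ℝ)
    (A : E ≃ₗᵢ[ℝ] E) : MeasurePreserving A (μ.map (r • ·)) (μ.map (r • ·)) := by
  have hA : Measurable A := A.continuous.measurable
  refine ⟨hA, ?_⟩
  conv_rhs => rw [← (hμ A).map_eq]
  rw [Measure.map_map hA (measurable_const_smul r), Measure.map_map (measurable_const_smul r) hA]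
  simp only [Function.comp_def, map_smul]

variable [FiniteDimensional ℝ E]

lemma toSphere_map_coe_apply {T : Set E} (hT : MeasurableSet T) :
    (volume : Measure E).toSphere.map (↑) T =
      finrank ℝ E * volume (Ioo (0 : ℝ) 1 • (T ∩ sphere (0 : E) 1)) := by
  rw [Measure.map_apply measurable_subtype_coe hT,
    Measure.toSphere_apply' _ (measurable_subtype_coe hT), Subtype.image_preimage_coe, inter_comm]

lemma measurePreserving_toSphere_map_coe (A : E ≃ₗᵢ[ℝ] E) :
    MeasurePreserving A ((volume : Measure E).toSphere.map (↑))
      ((volume : Measure E).toSphere.map (↑)) := by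
  refine ⟨A.continuous.measurable, Measure.ext fun T hT ↦ ?_⟩
  have hcone : A ⁻¹' (Ioo (0 : ℝ) 1 • (T ∩ sphere (0 : E) 1)) =
      Ioo (0 : ℝ) 1 • (A ⁻¹' T ∩ sphere (0 : E) 1) := by
    ext z
    simp only [Set.mem_smul, mem_preimage, mem_inter_iff, mem_sphere_zero_iff_norm]
    constructor
    · rintro ⟨r, hr, y, ⟨hyT, hy⟩, h⟩
      exact ⟨r, hr, A.symm y, by simp [hyT, hy], A.injective (by simpa using h)⟩
    · rintro ⟨r, hr, y, ⟨hyT, hy⟩, rfl⟩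
      exact ⟨r, hr, A y, by simp [hyT, hy], by simp⟩
  rw [Measure.map_apply A.continuous.measurable hT, toSphere_map_coe_apply hT,
    toSphere_map_coe_apply (A.continuous.measurable hT), ← hcone,
    A.measurePreserving.measure_preimage_emb A.toHomeomorph.measurableEmbedding]

lemma integral_toSphere_comp_neg (f : E → ℝ) :
    ∫ w : sphere (0 : E) 1, f (-w) ∂(volume : Measure E).toSphere =
      ∫ w : sphere (0 : E) 1, f w ∂(volume : Measure E).toSphere := by
  have hcoe : MeasurableEmbedding ((↑) : sphere (0 : E) 1 → E) :=
    .subtype_coe isClosed_sphere.measurableSet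
  rw [← hcoe.integral_map, ← hcoe.integral_map (g := fun z ↦ f (-z))]
  exact (measurePreserving_toSphere_map_coe (.neg ℝ)).integral_comp
    (LinearIsometryEquiv.neg ℝ : E ≃ₗᵢ[ℝ] E).toHomeomorph.measurableEmbedding f

theorem integral_eq_zero_of_integral_toSphere_eq_zero [Nontrivial E] [IsFiniteMeasure μ]
    (hμ : ∀ A : E ≃ₗᵢ[ℝ] E, MeasurePreserving A μ μ) (hs : 0 < s) (hμs : ∀ᵐ y ∂μ, ‖y‖ = s)
    {f : E → ℝ}
    (hf : ∫ w : sphere (0 : E) 1, f (s • (w : E)) ∂(volume : Measure E).toSphere = 0) :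
    ∫ y, f y ∂μ = 0 := by
  let σ : Measure E := (volume : Measure E).toSphere.map (↑)
  have hcoe : MeasurableEmbedding ((↑) : sphere (0 : E) 1 → E) :=
    .subtype_coe isClosed_sphere.measurableSet
  have hsmul : MeasurableEmbedding (fun z : E ↦ s • z) := measurableEmbedding_const_smul₀ hs.ne'
  have hσf : ∫ y, f y ∂σ.map (s • ·) = 0 := by
    rw [hsmul.integral_map, hcoe.integral_map, hf]
  have hσs : ∀ᵐ y ∂σ.map (s • ·), ‖y‖ = s := by
    rw [hsmul.ae_map_iff, hcoe.ae_map_iff]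
    exact .of_forall fun w ↦ by simp [norm_smul, abs_of_pos hs]
  have hσ : σ.map (s • ·) univ ≠ 0 := by
    rw [hsmul.map_apply, hcoe.map_apply]
    simp only [preimage_univ, ne_eq, Measure.measure_univ_eq_zero, Measure.toSphere_ne_zero,
      not_false_eq_true]
  have huniq := smul_eq_smul_of_measurePreserving_of_norm_eq hμ
    (measurePreserving_map_smul measurePreserving_toSphere_map_coe s) hs hμs hσs
  have hint : (μ univ).toReal • ∫ y, f y ∂σ.map (s • ·) =
      (σ.map (s • ·) univ).toReal • ∫ y, f y ∂μ := by
    rw [← integral_smul_measure, huniq, integral_smul_measure]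
  rw [hσf, smul_zero] at hint
  exact (smul_eq_zero.1 hint.symm).resolve_left (ENNReal.toReal_ne_zero.2 ⟨hσ, measure_ne_top _ _⟩)

end Rotation

section ChangeOfCentre

variable {F : Type*} [NormedAddCommGroup F] [NormedSpace ℝ F]

lemma hasDerivAt_intervalIntegral_of_continuousOn_Ioi [CompleteSpace F] {f : ℝ → F} {a u s : ℝ}
    (hf : ContinuousOn f (Ioi a)) (hu : a < u) (hs : a < s) :
    HasDerivAt (fun v ↦ ∫ r in u..v, f r) (f s) s := by
  have huIcc : uIcc u s ⊆ Ioi a := fun r hr ↦ (lt_inf_iff.2 ⟨hu, hs⟩).trans_le hr.1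
  exact intervalIntegral.integral_hasDerivAt_right (hf.mono huIcc).intervalIntegrable
    (hf.stronglyMeasurableAtFilter isOpen_Ioi s hs) (hf.continuousAt (Ioi_mem_nhds hs))

lemma eqOn_Ioi_of_intervalIntegral_eq [CompleteSpace F] {f g : ℝ → F} {a : ℝ}
    (hf : ContinuousOn f (Ioi a)) (hg : ContinuousOn g (Ioi a))
    (h : ∀ u v, a < u → u ≤ v → ∫ r in u..v, f r = ∫ r in u..v, g r) : EqOn f g (Ioi a) := by
  intro s hs
  obtain ⟨u, hu, hus⟩ := exists_between (mem_Ioi.1 hs)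
  refine (hasDerivAt_intervalIntegral_of_continuousOn_Ioi hf hu hs).unique
    ((hasDerivAt_intervalIntegral_of_continuousOn_Ioi hg hu hs).congr_of_eventuallyEq ?_)
  filter_upwards [Ioi_mem_nhds hus] with v hv using h u v hu (mem_Ioi.1 hv).le

section CompactParameter

variable {X : Type*} [TopologicalSpace X] [CompactSpace X]
  [MeasurableSpace X] [BorelSpace X] {ν : Measure X} [IsFiniteMeasure ν] {f : ℝ → X → F} {a : ℝ}

lemma continuousOn_integral_of_compactSpace (hf : ContinuousOn f.uncurry (Ioi a ×ˢ univ)) :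
    ContinuousOn (fun s ↦ ∫ w, f s w ∂ν) (Ioi a) :=
  continuousOn_integral_of_compact_support isCompact_univ hf fun _ w _ hw ↦ (hw (mem_univ w)).elim

omit [NormedSpace ℝ F] in
lemma integrable_uncurry_Ioc_of_continuousOn [T2Space X] [SecondCountableTopology X]
    (hf : ContinuousOn f.uncurry (Ioi a ×ˢ univ)) {u : ℝ} (hu : a < u) (v : ℝ) :
    Integrable f.uncurry ((volume.restrict (Ioc u v)).prod ν) := by
  have hIcc : Icc u v ×ˢ univ ⊆ Ioi a ×ˢ (univ : Set X) :=
    prod_mono_left fun s hs ↦ hu.trans_le hs.1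
  rw [← ν.restrict_univ, Measure.prod_restrict]
  exact ((hf.mono hIcc).integrableOn_compact (isCompact_Icc.prod isCompact_univ)).mono_set
    (prod_mono_left Ioc_subset_Icc_self)

end CompactParameter

variable {E : Type*} [NormedAddCommGroup E] {x w : E} {r s : ℝ}

lemma sq_sub_sq_norm_pos (hs : ‖x‖ < s) : 0 < s ^ 2 - ‖x‖ ^ 2 :=
  sub_pos.2 (pow_lt_pow_left₀ hs (norm_nonneg x) two_ne_zero)

variable [InnerProductSpace ℝ E]

/-- Half the length of the chord cut out of the sphere of radius `s` about `x` by the line through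
the origin in the direction of the unit vector `w`. -/
def halfChord (x w : E) (s : ℝ) : ℝ := √(⟪x, w⟫ ^ 2 + (s ^ 2 - ‖x‖ ^ 2))

/-- The distance `ρ` at which the ray from the origin in the direction of the unit vector `w` leaves
the ball of radius `s > ‖x‖` about `x`: the positive root of `ρ² - 2 ρ ⟪x, w⟫ = s² - ‖x‖²`. -/
def exitRadius (x w : E) (s : ℝ) : ℝ := ⟪x, w⟫ + halfChord x w s

lemma halfChord_sq (hs : ‖x‖ < s) : halfChord x w s ^ 2 = ⟪x, w⟫ ^ 2 + (s ^ 2 - ‖x‖ ^ 2) :=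
  Real.sq_sqrt (add_nonneg (sq_nonneg _) (sq_sub_sq_norm_pos hs).le)

lemma abs_inner_lt_halfChord (hs : ‖x‖ < s) : |⟪x, w⟫| < halfChord x w s :=
  Real.lt_sqrt_of_sq_lt (by rw [sq_abs]; exact lt_add_of_pos_right _ (sq_sub_sq_norm_pos hs))

lemma halfChord_pos (hs : ‖x‖ < s) : 0 < halfChord x w s :=
  (abs_nonneg _).trans_lt (abs_inner_lt_halfChord hs)

lemma exitRadius_pos (hs : ‖x‖ < s) : 0 < exitRadius x w s :=
  neg_lt_iff_pos_add'.1 ((neg_le_abs _).trans_lt (abs_inner_lt_halfChord hs))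

lemma halfChord_neg (x w : E) (s : ℝ) : halfChord x (-w) s = halfChord x w s := by
  simp only [halfChord, inner_neg_right, neg_sq]

lemma exitRadius_neg (x w : E) (s : ℝ) : exitRadius x (-w) s = halfChord x w s - ⟪x, w⟫ := by
  rw [exitRadius, halfChord_neg, inner_neg_right, neg_add_eq_sub]

lemma exitRadius_mul_exitRadius_neg (hs : ‖x‖ < s) :
    exitRadius x w s * exitRadius x (-w) s = s ^ 2 - ‖x‖ ^ 2 := by
  rw [exitRadius_neg, exitRadius]
  linear_combination halfChord_sq (w := w) hs

lemma norm_smul_sub_le_iff (hw : ‖w‖ = 1) (hs : ‖x‖ < s) (hr : 0 < r) :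
    ‖r • w - x‖ ≤ s ↔ r ≤ exitRadius x w s := by
  have hs0 : 0 < s := (norm_nonneg x).trans_lt hs
  have hnorm : ‖r • w - x‖ ^ 2 = r ^ 2 - 2 * r * ⟪x, w⟫ + ‖x‖ ^ 2 := by
    rw [norm_sub_sq_real, norm_smul, hw, real_inner_smul_left, real_inner_comm, mul_one,
      Real.norm_eq_abs, sq_abs]
    ring
  have hroots : s ^ 2 - ‖r • w - x‖ ^ 2 = (exitRadius x w s - r) * (r + exitRadius x (-w) s) := by
    rw [hnorm, exitRadius_neg, exitRadius]
    linear_combination - halfChord_sq (w := w) hs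
  rw [← sq_le_sq₀ (norm_nonneg _) hs0.le, ← sub_nonneg, hroots, mul_nonneg_iff_of_pos_right
    (add_pos hr (exitRadius_pos hs)), sub_nonneg]

lemma exitRadius_le_exitRadius {t : ℝ} (hs : ‖x‖ < s) (hst : s ≤ t) :
    exitRadius x w s ≤ exitRadius x w t := by
  have hs0 : 0 ≤ s := (norm_nonneg x).trans hs.le
  unfold exitRadius halfChord
  gcongr

lemma hasDerivAt_exitRadius (hs : ‖x‖ < s) :
    HasDerivAt (exitRadius x w) (s / halfChord x w s) s := by
  have hsq : HasDerivAt (fun s ↦ ⟪x, w⟫ ^ 2 + (s ^ 2 - ‖x‖ ^ 2)) (2 * s) s := by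
    simpa using ((hasDerivAt_pow 2 s).sub_const (‖x‖ ^ 2)).const_add (⟪x, w⟫ ^ 2)
  have hsqrt := hsq.sqrt (Real.sqrt_pos.1 (halfChord_pos hs)).ne'
  exact (hsqrt.const_add ⟪x, w⟫).congr_deriv (mul_div_mul_left _ _ two_ne_zero)

lemma continuous_halfChord (x : E) : Continuous fun p : ℝ × E ↦ halfChord x p.2 p.1 := by
  unfold halfChord
  fun_prop

lemma continuous_exitRadius (x : E) : Continuous fun p : ℝ × E ↦ exitRadius x p.2 p.1 := by
  unfold exitRadius
  exact (continuous_const.inner continuous_snd).add (continuous_halfChord x)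

lemma add_smul_ne_zero_of_norm_lt {w : E} (hw : ‖w‖ = 1) (hs : ‖x‖ < s) : x + s • w ≠ 0 := by
  intro h
  rw [eq_neg_of_add_eq_zero_left h, norm_neg, norm_smul, hw, mul_one, Real.norm_eq_abs] at hs
  exact hs.not_ge (le_abs_self s)

variable {g : E → F}

omit [NormedSpace ℝ F] in
lemma continuousOn_comp_add_smul (hg : ContinuousOn g {0}ᶜ) (x : E) :
    ContinuousOn (Function.uncurry fun (s : ℝ) (w : sphere (0 : E) 1) ↦ g (x + s • (w : E)))
      (Ioi ‖x‖ ×ˢ univ) :=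
  hg.comp (by fun_prop) fun p hp ↦ add_smul_ne_zero_of_norm_lt (norm_eq_of_mem_sphere p.2) hp.1

lemma continuousOn_comp_exitRadius_smul (hg : ContinuousOn g {0}ᶜ) (x : E) (n : ℕ) :
    ContinuousOn (Function.uncurry fun (s : ℝ) (w : sphere (0 : E) 1) ↦ (s / halfChord x w s) •
      exitRadius x w s ^ n • g (exitRadius x w s • (w : E))) (Ioi ‖x‖ ×ˢ univ) := by
  have hcoe : Continuous fun p : ℝ × sphere (0 : E) 1 ↦ (p.1, (p.2 : E)) := by fun_prop
  have hq : ContinuousOn (fun p : ℝ × sphere (0 : E) 1 ↦ p.1 / halfChord x p.2 p.1)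
      (Ioi ‖x‖ ×ˢ univ) :=
    continuousOn_fst.div ((continuous_halfChord x).comp hcoe).continuousOn
      fun _ hp ↦ (halfChord_pos hp.1).ne'
  have hρ := (continuous_exitRadius x).comp hcoe
  refine hq.smul ((hρ.pow n).continuousOn.smul (hg.comp ?_ fun p hp ↦ ?_))
  · exact (hρ.smul (continuous_subtype_val.comp continuous_snd)).continuousOn
  · exact smul_ne_zero (exitRadius_pos hp.1).ne' (ne_zero_of_mem_unit_sphere p.2)

lemma intervalIntegral_exitRadius (hg : ContinuousOn g {0}ᶜ) {w : E} (hw : ‖w‖ = 1) {u v : ℝ}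
    (hu : ‖x‖ < u) (huv : u ≤ v) (n : ℕ) :
    ∫ r in exitRadius x w u..exitRadius x w v, r ^ n • g (r • w) =
      ∫ s in u..v, (s / halfChord x w s) •
        exitRadius x w s ^ n • g (exitRadius x w s • w) := by
  have hmem : ∀ s ∈ uIcc u v, ‖x‖ < s := fun s hs ↦ hu.trans_le ((uIcc_of_le huv ▸ hs).1)
  have hq : ContinuousOn (fun s ↦ s / halfChord x w s) (uIcc u v) :=
    continuousOn_id.div ((continuous_halfChord x).comp (.prodMk_left w)).continuousOn
      fun s hs ↦ (halfChord_pos (hmem s hs)).ne'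
  have hray : ContinuousOn (fun r : ℝ ↦ r ^ n • g (r • w)) (exitRadius x w '' uIcc u v) := by
    refine (continuousOn_pow n).smul (hg.comp (by fun_prop) ?_)
    rintro _ ⟨s, hs, rfl⟩
    exact smul_ne_zero (exitRadius_pos (hmem s hs)).ne' (norm_ne_zero_iff.1 (by simp [hw]))
  exact (intervalIntegral.integral_deriv_smul_comp'
    (fun s hs ↦ hasDerivAt_exitRadius (hmem s hs)) hq hray).symm

variable [FiniteDimensional ℝ E] [MeasurableSpace E] [BorelSpace E]

omit [NormedSpace ℝ F] in
lemma integrableOn_norm_sub_mem_Ioc {u : ℝ} (hg : ContinuousOn g {0}ᶜ) (hu : ‖x‖ < u) (v : ℝ)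
    (μ : Measure E) [IsFiniteMeasureOnCompacts μ] :
    IntegrableOn g {z | ‖z - x‖ ∈ Ioc u v} μ := by
  have hK : IsCompact (closedBall x v \ ball x u) := (isCompact_closedBall x v).diff isOpen_ball
  refine IntegrableOn.mono_set (ContinuousOn.integrableOn_compact hK (hg.mono ?_))
    fun z hz ↦ ⟨mem_closedBall_iff_norm.2 hz.2, fun h ↦ hz.1.not_gt (mem_ball_iff_norm.1 h)⟩
  rintro z ⟨-, hz⟩ rfl
  exact hz (by simpa using hu)

variable [Nontrivial E]

lemma setIntegral_norm_sub_mem_Ioc_eq_about_centre (hg : ContinuousOn g {0}ᶜ) {u v : ℝ}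
    (hu : ‖x‖ < u) (huv : u ≤ v) :
    ∫ z in {z | ‖z - x‖ ∈ Ioc u v}, g z = ∫ s in u..v, s ^ (finrank ℝ E - 1) •
      ∫ w : sphere (0 : E) 1, g (x + s • (w : E)) ∂(volume : Measure E).toSphere := by
  have hpre : (x + ·) ⁻¹' {z : E | ‖z - x‖ ∈ Ioc u v} = {z | ‖z‖ ∈ Ioc u v} := by
    ext z
    simp only [mem_preimage, mem_ofPred_eq, add_sub_cancel_left]
  have hint := integrableOn_norm_sub_mem_Ioc hg hu v volume
  have htrans := measurePreserving_add_left (volume : Measure E) x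
  have hemb := measurableEmbedding_addLeft x
  rw [← htrans.integrableOn_comp_preimage hemb, hpre] at hint
  rw [← htrans.setIntegral_preimage_emb hemb, hpre]
  exact setIntegral_norm_mem_Ioc volume ((norm_nonneg x).trans hu.le) huv hint

lemma setIntegral_norm_sub_mem_Ioc_eq_about_zero (hg : ContinuousOn g {0}ᶜ) {u v : ℝ}
    (hu : ‖x‖ < u) (huv : u ≤ v) :
    ∫ z in {z | ‖z - x‖ ∈ Ioc u v}, g z =
      ∫ s in u..v, ∫ w : sphere (0 : E) 1, (s / halfChord x w s) • exitRadius x w s ^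
        (finrank ℝ E - 1) • g (exitRadius x w s • (w : E)) ∂(volume : Measure E).toSphere := by
  have hA : MeasurableSet {z : E | ‖z - x‖ ∈ Ioc u v} :=
    (measurable_norm.comp (measurable_id.sub_const x)) measurableSet_Ioc
  rw [setIntegral_eq_integral_sphere_intervalIntegral volume hA
    (integrableOn_norm_sub_mem_Ioc hg hu v volume) (fun w ↦ (exitRadius_pos hu).le)
    (fun w ↦ exitRadius_le_exitRadius hu huv) fun w r hr ↦ ?_, intervalIntegral_integral_swap]
  · refine integral_congr_ae <| .of_forall fun w ↦ ?_
    exact intervalIntegral_exitRadius hg (norm_eq_of_mem_sphere w) hu huv _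
  · rw [uIoc_of_le huv]
    exact integrable_uncurry_Ioc_of_continuousOn (continuousOn_comp_exitRadius_smul hg x _) hu v
  · rw [mem_ofPred_eq, mem_Ioc, mem_Ioc, ← not_le,
      norm_smul_sub_le_iff (norm_eq_of_mem_sphere w) hu hr,
      norm_smul_sub_le_iff (norm_eq_of_mem_sphere w) (hu.trans_le huv) hr, not_le]

theorem integral_toSphere_comp_add_smul [CompleteSpace F] (hg : ContinuousOn g {0}ᶜ)
    (hs : ‖x‖ < s) :
    s ^ (finrank ℝ E - 1) •
        ∫ w : sphere (0 : E) 1, g (x + s • (w : E)) ∂(volume : Measure E).toSphere =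
      ∫ w : sphere (0 : E) 1, (s / halfChord x w s) • exitRadius x w s ^ (finrank ℝ E - 1) •
        g (exitRadius x w s • (w : E)) ∂(volume : Measure E).toSphere := by
  refine eqOn_Ioi_of_intervalIntegral_eq (a := ‖x‖)
    ((continuousOn_pow _).smul
      (continuousOn_integral_of_compactSpace (continuousOn_comp_add_smul hg x)))
    (continuousOn_integral_of_compactSpace (continuousOn_comp_exitRadius_smul hg x _)) ?_ hs
  intro u v hu huv
  exact (setIntegral_norm_sub_mem_Ioc_eq_about_centre hg hu huv).symm.trans
    (setIntegral_norm_sub_mem_Ioc_eq_about_zero hg hu huv)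

end ChangeOfCentre

section Homogeneous

variable {E : Type*} [NormedAddCommGroup E] [NormedSpace ℝ E] {f g : E → ℝ} {n m : ℤ}

/-- Homogeneity of degree `n` under all nonzero dilations. Negative factors are included, so that
`f` has the parity of `n`. -/
def IsHomogeneousOfDegree (n : ℤ) (f : E → ℝ) : Prop :=
  ∀ c : ℝ, c ≠ 0 → ∀ z, f (c • z) = c ^ n * f z

namespace IsHomogeneousOfDegree

lemma neg_apply (hf : IsHomogeneousOfDegree n f) (z : E) : f (-z) = (-1) ^ n * f z := by
  simpa only [neg_smul, one_smul] using hf (-1) (neg_ne_zero.2 one_ne_zero) z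

lemma mul (hf : IsHomogeneousOfDegree n f) (hg : IsHomogeneousOfDegree m g) :
    IsHomogeneousOfDegree (n + m) fun z ↦ f z * g z := by
  intro c hc z
  simp only [hf c hc, hg c hc, zpow_add₀ hc, mul_mul_mul_comm]

lemma sub (hf : IsHomogeneousOfDegree n f) (hg : IsHomogeneousOfDegree n g) :
    IsHomogeneousOfDegree n fun z ↦ f z - g z := by
  intro c hc z
  simp only [hf c hc, hg c hc, mul_sub]

lemma fderiv_apply (hf : IsHomogeneousOfDegree n f) (hfd : Differentiable ℝ f) (v : E) :
    IsHomogeneousOfDegree (n - 1) fun z ↦ fderiv ℝ f z v := by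
  intro c hc z
  have hcomp : c • fderiv ℝ f (c • z) = c ^ n • fderiv ℝ f z := by
    rw [← fderiv_comp_smul, ← fderiv_fun_const_smul (hfd z)]
    exact congrArg (fderiv ℝ · z) (funext (hf c hc))
  have hv : c * fderiv ℝ f (c • z) v = c ^ n * fderiv ℝ f z v :=
    DFunLike.congr_fun hcomp v
  rw [zpow_sub_one₀ hc, mul_right_comm, ← hv, mul_right_comm, mul_inv_cancel₀ hc, one_mul]

lemma fderiv_self (hf : IsHomogeneousOfDegree n f) {z : E} (hz : DifferentiableAt ℝ f z) :
    fderiv ℝ f z z = n * f z := by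
  have hray : HasDerivAt (fun c : ℝ ↦ f (c • z)) (fderiv ℝ f z z) 1 := by
    have hline : HasDerivAt (fun c : ℝ ↦ c • z) z 1 := by
      simpa using (hasDerivAt_id (1 : ℝ)).smul_const z
    exact hz.hasFDerivAt.comp_hasDerivAt_of_eq 1 hline (one_smul ℝ z).symm
  have hpow : HasDerivAt (fun c : ℝ ↦ c ^ n * f z) (n * f z) 1 := by
    simpa using (hasDerivAt_zpow n (1 : ℝ) (.inl one_ne_zero)).mul_const (f z)
  refine hray.unique (hpow.congr_of_eventuallyEq ?_)
  filter_upwards [eventually_ne_nhds (one_ne_zero (α := ℝ))] with c hc using hf c hc z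

lemma exists_norm_le [ProperSpace E] (hf : IsHomogeneousOfDegree n f) (hfc : Continuous f) :
    ∃ C, ∀ z, ‖f z‖ ≤ C * (1 + ‖z‖ ^ n.natAbs) := by
  obtain ⟨C, hC⟩ :=
    (isCompact_closedBall (0 : E) 1).exists_bound_of_continuousOn hfc.continuousOn
  have hC0 : 0 ≤ C := (norm_nonneg _).trans (hC 0 (by simp))
  refine ⟨C, fun z ↦ ?_⟩
  rcases le_or_gt ‖z‖ 1 with hz | hz
  · exact (hC z (by simpa using hz)).trans (le_mul_of_one_le_right hC0 (by simp))
  · have hz0 : ‖z‖ ≠ 0 := (one_pos.trans hz).ne'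
    have hpow : ‖z‖ ^ n ≤ ‖z‖ ^ n.natAbs := by
      rw [← zpow_natCast]
      exact zpow_le_zpow_right₀ hz.le Int.le_natAbs
    calc ‖f z‖ = ‖z‖ ^ n * ‖f (‖z‖⁻¹ • z)‖ := by
          conv_lhs => rw [← smul_inv_smul₀ hz0 z, hf _ hz0, norm_mul, norm_zpow, norm_norm]
      _ ≤ ‖z‖ ^ n.natAbs * C := by
          gcongr
          exact hC _ (by simp [norm_smul, hz0])
      _ ≤ C * (1 + ‖z‖ ^ n.natAbs) := by
          rw [mul_comm]
          gcongr
          exact le_add_of_nonneg_left zero_le_one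

end IsHomogeneousOfDegree

end Homogeneous

section Gaussian

variable {E : Type*} [NormedAddCommGroup E] [InnerProductSpace ℝ E]
  {f u v : E → ℝ} {k n m : ℤ}

lemma IsHomogeneousOfDegree.inner_pow (x : E) (j : ℕ) :
    IsHomogeneousOfDegree (j : ℤ) fun z ↦ ⟪x, z⟫ ^ j := by
  intro c _ z
  simp only [real_inner_smul_right, mul_pow, zpow_natCast]

/-- The unnormalised standard Gaussian density. It makes polynomially growing functions integrable,
and the Ornstein–Uhlenbeck operator `Δ - z · ∇` self-adjoint. -/
def gaussianWeight (z : E) : ℝ := Real.exp (-(1 / 2) * ‖z‖ ^ 2)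

omit [InnerProductSpace ℝ E] in
lemma gaussianWeight_pos (z : E) : 0 < gaussianWeight z := Real.exp_pos _

lemma hasFDerivAt_gaussianWeight (z : E) :
    HasFDerivAt gaussianWeight (-(gaussianWeight z • innerSL ℝ z)) z := by
  refine ((hasStrictFDerivAt_norm_sq z).hasFDerivAt.const_mul (-(1 / 2))).exp.congr_fderiv ?_
  ext v
  simp [gaussianWeight]

lemma sum_inner_mul_fderiv {ι : Type*} [Fintype ι] (b : OrthonormalBasis ι ℝ E) (f : E → ℝ)
    (z : E) : ∑ i, ⟪b i, z⟫ * fderiv ℝ f z (b i) = fderiv ℝ f z z := by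
  simpa only [map_sum, map_smul, smul_eq_mul] using congrArg (fderiv ℝ f z) (b.sum_repr' z)

variable [FiniteDimensional ℝ E]

lemma laplacian_eq_sum_fderiv_fderiv {ι : Type*} [Fintype ι] (b : OrthonormalBasis ι ℝ E) {z : E}
    (hf : ContDiffAt ℝ 2 f z) :
    (Δ f) z = ∑ i, fderiv ℝ (fun w ↦ fderiv ℝ f w (b i)) z (b i) := by
  have hd : DifferentiableAt ℝ (fderiv ℝ f) z :=
    (hf.fderiv_right (m := 1) le_rfl).differentiableAt one_ne_zero
  rw [laplacian_eq_iteratedFDeriv_orthonormalBasis f b]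
  refine Finset.sum_congr rfl fun i _ ↦ ?_
  rw [iteratedFDeriv_two_apply, fderiv_clm_apply hd (differentiableAt_const _)]
  simp

lemma sum_fderiv_mul_fderiv_sub {ι : Type*} [Fintype ι] (b : OrthonormalBasis ι ℝ E)
    (hu : ContDiff ℝ 2 u) (hv : ContDiff ℝ 2 v) (z : E) :
    ∑ i, fderiv ℝ (fun w ↦ u w * fderiv ℝ v w (b i) - v w * fderiv ℝ u w (b i)) z (b i) =
      u z * (Δ v) z - v z * (Δ u) z := by
  have hu' := hu.differentiable two_ne_zero z
  have hv' := hv.differentiable two_ne_zero z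
  rw [laplacian_eq_sum_fderiv_fderiv b hu.contDiffAt,
    laplacian_eq_sum_fderiv_fderiv b hv.contDiffAt, Finset.mul_sum, Finset.mul_sum,
    ← Finset.sum_sub_distrib]
  refine Finset.sum_congr rfl fun i _ ↦ ?_
  have hdu : DifferentiableAt ℝ (fun w ↦ fderiv ℝ u w (b i)) z :=
    ((hu.fderiv_right (m := 1) le_rfl).clm_apply contDiff_const).differentiable one_ne_zero z
  have hdv : DifferentiableAt ℝ (fun w ↦ fderiv ℝ v w (b i)) z :=
    ((hv.fderiv_right (m := 1) le_rfl).clm_apply contDiff_const).differentiable one_ne_zero z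
  rw [fderiv_fun_sub (hu'.fun_mul hdv) (hv'.fun_mul hdu), fderiv_fun_mul hu' hdv,
    fderiv_fun_mul hv' hdu]
  simp only [FunLike.coe_sub, FunLike.coe_add, FunLike.coe_smul, Pi.sub_apply, Pi.add_apply,
    Pi.smul_apply, smul_eq_mul]
  ring

lemma laplacian_inner_pow (x z : E) (j : ℕ) :
    (Δ fun z ↦ ⟪x, z⟫ ^ j) z = j * (j - 1 : ℕ) * ‖x‖ ^ 2 * ⟪x, z⟫ ^ (j - 2) := by
  let b := stdOrthonormalBasis ℝ E
  have hpow (j : ℕ) : ContDiff ℝ 2 fun z ↦ ⟪x, z⟫ ^ j := (innerSL ℝ x).contDiff.pow j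
  have hderiv : ∀ (j : ℕ) (w a : E),
      fderiv ℝ (fun z ↦ ⟪x, z⟫ ^ j) w a = j * ⟪x, w⟫ ^ (j - 1) * ⟪x, a⟫ := fun j w a ↦ by
    simpa using DFunLike.congr_fun ((innerSL ℝ x).hasFDerivAt.pow j).fderiv a
  have hderiv₂ : ∀ a : E, fderiv ℝ (fun w ↦ fderiv ℝ (fun z ↦ ⟪x, z⟫ ^ j) w a) z a =
      j * (j - 1 : ℕ) * ⟪x, z⟫ ^ (j - 2) * ⟪a, x⟫ ^ 2 := fun a ↦ by
    simp only [hderiv]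
    have hd : DifferentiableAt ℝ (fun z ↦ ⟪x, z⟫ ^ (j - 1)) z :=
      (hpow (j - 1)).differentiable two_ne_zero z
    rw [fderiv_mul_const (hd.const_mul _), fderiv_const_mul hd]
    simp only [FunLike.coe_smul, Pi.smul_apply, smul_eq_mul, hderiv, real_inner_comm, Nat.sub_sub]
    ring
  rw [laplacian_eq_sum_fderiv_fderiv b (hpow j).contDiffAt,
    Finset.sum_congr rfl fun i _ ↦ hderiv₂ (b i), ← Finset.mul_sum, b.sum_sq_inner_right]
  ring

variable [MeasurableSpace E] [BorelSpace E] [Nontrivial E]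

lemma integrable_norm_pow_mul_gaussianWeight (n : ℕ) :
    Integrable fun z : E ↦ ‖z‖ ^ n * gaussianWeight z := by
  refine (integrable_fun_norm_addHaar (volume : Measure E)
    (f := fun r ↦ r ^ n * Real.exp (-(1 / 2) * r ^ 2))).2 ?_
  have hnat : (-1 : ℝ) < (finrank ℝ E - 1 + n : ℕ) := neg_one_lt_zero.trans_le (Nat.cast_nonneg _)
  refine (integrableOn_rpow_mul_exp_neg_mul_sq one_half_pos hnat).congr_fun (fun r _ ↦ ?_)
    measurableSet_Ioi
  simp only [Real.rpow_natCast, smul_eq_mul, pow_add, mul_assoc]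

namespace IsHomogeneousOfDegree

lemma integrable_mul_gaussianWeight (hf : IsHomogeneousOfDegree n f) (hfc : Continuous f) :
    Integrable fun z ↦ f z * gaussianWeight z := by
  obtain ⟨C, hC⟩ := hf.exists_norm_le hfc
  have hγ : Continuous (gaussianWeight : E → ℝ) :=
    continuous_iff_continuousAt.2 fun z ↦ (hasFDerivAt_gaussianWeight z).continuousAt
  have hbound := ((integrable_norm_pow_mul_gaussianWeight 0).add
    (integrable_norm_pow_mul_gaussianWeight (E := E) n.natAbs)).const_mul C
  refine hbound.mono' (hfc.mul hγ).aestronglyMeasurable (.of_forall fun z ↦ ?_)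
  rw [norm_mul, Real.norm_of_nonneg (gaussianWeight_pos z).le, Pi.add_apply, pow_zero, ← add_mul,
    ← mul_assoc]
  exact mul_le_mul_of_nonneg_right (hC z) (gaussianWeight_pos z).le

lemma integrable_inner_mul_mul_gaussianWeight (hf : IsHomogeneousOfDegree n f) (hfc : Continuous f)
    (a : E) : Integrable fun z ↦ ⟪a, z⟫ * f z * gaussianWeight z := by
  simpa only [pow_one] using ((inner_pow a 1).mul hf).integrable_mul_gaussianWeight
    (((continuous_const.inner continuous_id).pow 1).mul hfc)

lemma integrable_fderiv_mul_gaussianWeight (hf : IsHomogeneousOfDegree n f) (hfd : ContDiff ℝ 1 f)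
    (a : E) : Integrable fun z ↦ fderiv ℝ f z a * gaussianWeight z :=
  (hf.fderiv_apply (hfd.differentiable one_ne_zero) a).integrable_mul_gaussianWeight
    ((hfd.continuous_fderiv one_ne_zero).clm_apply continuous_const)

lemma integral_fderiv_mul_gaussianWeight (hf : IsHomogeneousOfDegree n f) (hfd : ContDiff ℝ 1 f)
    (a : E) :
    ∫ z, fderiv ℝ f z a * gaussianWeight z = ∫ z, ⟪a, z⟫ * f z * gaussianWeight z := by
  have hγ (z : E) : f z * fderiv ℝ gaussianWeight z a = -(⟪a, z⟫ * f z * gaussianWeight z) := by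
    rw [(hasFDerivAt_gaussianWeight z).fderiv, real_inner_comm]
    simp only [FunLike.coe_neg, FunLike.coe_smul, Pi.neg_apply, Pi.smul_apply,
      innerSL_apply_apply, smul_eq_mul]
    ring
  have hparts := integral_mul_fderiv_eq_neg_fderiv_mul_of_integrable (μ := volume) (v := a)
    (hf.integrable_fderiv_mul_gaussianWeight hfd a)
    (by simpa only [hγ, Pi.neg_def] using
      (hf.integrable_inner_mul_mul_gaussianWeight hfd.continuous a).neg)
    (hf.integrable_mul_gaussianWeight hfd.continuous)
    (fun z _ ↦ hfd.differentiable one_ne_zero z)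
    (fun z _ ↦ (hasFDerivAt_gaussianWeight z).differentiableAt)
  simp only [hγ, integral_neg] at hparts
  exact (neg_injective hparts).symm

lemma integral_sum_fderiv_mul_gaussianWeight {ι : Type*} [Fintype ι] {b : ι → E} {W : ι → E → ℝ}
    (hW : ∀ i, IsHomogeneousOfDegree n (W i)) (hWd : ∀ i, ContDiff ℝ 1 (W i)) :
    ∫ z, (∑ i, fderiv ℝ (W i) z (b i)) * gaussianWeight z =
      ∫ z, (∑ i, ⟪b i, z⟫ * W i z) * gaussianWeight z := by
  simp only [Finset.sum_mul]
  rw [integral_finsetSum _ fun i _ ↦ (hW i).integrable_fderiv_mul_gaussianWeight (hWd i) (b i),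
    integral_finsetSum _ fun i _ ↦
      (hW i).integrable_inner_mul_mul_gaussianWeight (hWd i).continuous (b i)]
  exact Finset.sum_congr rfl fun i _ ↦ (hW i).integral_fderiv_mul_gaussianWeight (hWd i) (b i)

/- Green's identity for the Ornstein–Uhlenbeck operator, whose first order part multiplies a
homogeneous function by its degree: take the Gaussian divergence of `u ∇v - v ∇u`. -/
theorem sub_mul_integral_mul_gaussianWeight (hu : IsHomogeneousOfDegree n u)
    (hv : IsHomogeneousOfDegree m v) (hud : ContDiff ℝ 2 u) (hvd : ContDiff ℝ 2 v) :
    (m - n) * ∫ z, u z * v z * gaussianWeight z =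
      ∫ z, (u z * (Δ v) z - v z * (Δ u) z) * gaussianWeight z := by
  let b := stdOrthonormalBasis ℝ E
  have hu' := hud.differentiable two_ne_zero
  have hv' := hvd.differentiable two_ne_zero
  have hhom (i) : IsHomogeneousOfDegree (n + m - 1)
      fun z ↦ u z * fderiv ℝ v z (b i) - v z * fderiv ℝ u z (b i) := by
    refine sub ?_ ?_
    · simpa only [add_sub_assoc] using hu.mul (hv.fderiv_apply hv' (b i))
    · simpa only [add_sub_assoc, add_comm n m] using hv.mul (hu.fderiv_apply hu' (b i))
  have hdiff (i) : ContDiff ℝ 1 fun z ↦ u z * fderiv ℝ v z (b i) - v z * fderiv ℝ u z (b i) :=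
    ((hud.of_le one_le_two).mul ((hvd.fderiv_right le_rfl).clm_apply contDiff_const)).sub
      ((hvd.of_le one_le_two).mul ((hud.fderiv_right le_rfl).clm_apply contDiff_const))
  have hradial (z : E) :
      ∑ i, ⟪b i, z⟫ * (u z * fderiv ℝ v z (b i) - v z * fderiv ℝ u z (b i)) =
        (m - n) * (u z * v z) := by
    calc ∑ i, ⟪b i, z⟫ * (u z * fderiv ℝ v z (b i) - v z * fderiv ℝ u z (b i))
        = u z * ∑ i, ⟪b i, z⟫ * fderiv ℝ v z (b i) - v z * ∑ i, ⟪b i, z⟫ * fderiv ℝ u z (b i) := by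
          simp only [mul_sub, Finset.sum_sub_distrib, Finset.mul_sum, mul_left_comm]
      _ = (m - n) * (u z * v z) := by
          rw [sum_inner_mul_fderiv, sum_inner_mul_fderiv, hu.fderiv_self (hu' z),
            hv.fderiv_self (hv' z)]
          ring
  simpa only [hradial, sum_fderiv_mul_fderiv_sub b hud hvd, mul_assoc, integral_const_mul] using
    (integral_sum_fderiv_mul_gaussianWeight (b := b) hhom hdiff).symm

lemma integral_toSphere_eq_zero_of_integral_mul_gaussianWeight_eq_zero {n : ℕ}
    (hf : IsHomogeneousOfDegree (n : ℤ) f) (hfc : Continuous f)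
    (h0 : ∫ z, f z * gaussianWeight z = 0) :
    ∫ w : sphere (0 : E) 1, f w ∂(volume : Measure E).toSphere = 0 := by
  have hradial : ∀ r ∈ Ioi (0 : ℝ), r ^ (finrank ℝ E - 1) •
      ∫ w : sphere (0 : E) 1, f (r • (w : E)) * gaussianWeight (r • (w : E)) ∂volume.toSphere =
      r ^ ((finrank ℝ E - 1 + n : ℕ) : ℝ) * Real.exp (-(1 / 2) * r ^ (2 : ℝ)) *
        ∫ w : sphere (0 : E) 1, f w ∂volume.toSphere := fun r (hr : 0 < r) ↦ by
    have hγ (w : sphere (0 : E) 1) : gaussianWeight (r • (w : E)) =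
        Real.exp (-(1 / 2) * r ^ (2 : ℝ)) := by
      rw [gaussianWeight, norm_smul, norm_eq_of_mem_sphere, mul_one, Real.norm_eq_abs, sq_abs,
        Real.rpow_two]
    simp only [hγ, hf r hr.ne', integral_mul_const, integral_const_mul, Real.rpow_natCast,
      zpow_natCast, pow_add, smul_eq_mul]
    ring
  rw [integral_eq_integral_Ioi_integral_sphere volume (hf.integrable_mul_gaussianWeight hfc),
    setIntegral_congr_fun measurableSet_Ioi hradial, integral_mul_const,
    integral_rpow_mul_exp_neg_mul_rpow two_pos (neg_one_lt_zero.trans_le (Nat.cast_nonneg _))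
      one_half_pos] at h0
  have _hΓ : 0 < Real.Gamma ((((finrank ℝ E - 1 + n : ℕ) : ℝ) + 1) / 2) :=
    Real.Gamma_pos_of_pos (by positivity)
  exact (mul_eq_zero.1 h0).resolve_left (by positivity)

end IsHomogeneousOfDegree

lemma integral_inner_pow_mul_gaussianWeight {Y : E → ℝ} {k : ℕ} (hY : HarmonicOnNhd Y univ)
    (hhom : IsHomogeneousOfDegree (k : ℤ) Y) (x : E) {j : ℕ} (hj : j < k) :
    ∫ z, ⟪x, z⟫ ^ j * Y z * gaussianWeight z = 0 := by
  induction j using Nat.strong_induction_on with | _ j ih =>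
  have hpow : ContDiff ℝ 2 fun z ↦ ⟪x, z⟫ ^ j := (innerSL ℝ x).contDiff.pow j
  have hgreen := (IsHomogeneousOfDegree.inner_pow x j).sub_mul_integral_mul_gaussianWeight hhom hpow
    (contDiffOn_univ.1 hY.contDiffOn)
  have hlap (z : E) : (Δ Y) z = 0 := (hY z (mem_univ z)).2.self_of_nhds
  have hlower :
      j * (j - 1 : ℕ) * ‖x‖ ^ 2 * ∫ z, ⟪x, z⟫ ^ (j - 2) * Y z * gaussianWeight z = 0 := by
    rcases Nat.lt_or_ge j 2 with hj2 | hj2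
    · interval_cases j <;> simp
    · rw [ih (j - 2) (by lia) (by lia), mul_zero]
  have hright : ∫ z, (⟪x, z⟫ ^ j * (Δ Y) z -
      Y z * (Δ fun z ↦ ⟪x, z⟫ ^ j) z) * gaussianWeight z = 0 := by
    rw [← neg_zero, ← hlower, ← integral_const_mul, ← integral_neg]
    refine integral_congr_ae <| .of_forall fun z ↦ ?_
    simp only [hlap, laplacian_inner_pow]
    ring
  rw [hright] at hgreen
  have hkj : (((k : ℤ) : ℝ) - ((j : ℤ) : ℝ)) ≠ 0 :=
    sub_ne_zero.2 (by exact_mod_cast hj.ne')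
  exact (mul_eq_zero.1 hgreen).resolve_left hkj

end Gaussian

section OddPower

open Polynomial

lemma exists_degree_lt_and_add_pow_sub_sub_pow_eq {R : Type*} [CommRing R] (c : R) (m : ℕ) :
    ∃ P : R[X], P.degree < m ∧
      ∀ b q, q ^ 2 = b ^ 2 + c → (b + q) ^ m - (b - q) ^ m = q * P.eval b := by
  induction m using Nat.twoStepInduction with
  | zero => exact ⟨0, by simp, by simp⟩
  | one =>
    refine ⟨C 2, degree_C_le.trans_lt (by simp), fun b q _ ↦ ?_⟩
    rw [eval_C]
    ring
  | more m ih₀ ih₁ =>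
    obtain ⟨P, hP, hPeq⟩ := ih₀
    obtain ⟨Q, hQ, hQeq⟩ := ih₁
    rw [degree_lt_iff_coeff_zero] at hP hQ
    refine ⟨C 2 * X * Q + C c * P, (degree_lt_iff_coeff_zero _ _).2 fun n hn ↦ ?_,
      fun b q hq ↦ ?_⟩
    · obtain ⟨n, rfl⟩ := Nat.exists_eq_succ_of_ne_zero (n := n) (by lia)
      rw [coeff_add, mul_assoc, coeff_C_mul, coeff_C_mul, coeff_X_mul, hQ n (by lia),
        hP (n + 1) (by lia), mul_zero, mul_zero, add_zero]
    · -- `b + q` and `b - q` are the roots of `T ^ 2 = 2 * b * T + c`.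
      have hadd : (b + q) ^ (m + 2) = 2 * b * (b + q) ^ (m + 1) + c * (b + q) ^ m := by
        linear_combination (b + q) ^ m * hq
      have hsub : (b - q) ^ (m + 2) = 2 * b * (b - q) ^ (m + 1) + c * (b - q) ^ m := by
        linear_combination (b - q) ^ m * hq
      simp only [eval_add, eval_mul, eval_C, eval_X]
      linear_combination hadd - hsub + 2 * b * hQeq b q hq + c * hPeq b q hq

end OddPower

section SphericalHarmonic

variable {E : Type*} [NormedAddCommGroup E] [InnerProductSpace ℝ E] [FiniteDimensional ℝ E]
  [MeasurableSpace E] [BorelSpace E] [Nontrivial E] {Y : E → ℝ} {k : ℕ}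

lemma integral_toSphere_inner_pow_mul (hY : HarmonicOnNhd Y univ)
    (hhom : IsHomogeneousOfDegree (k : ℤ) Y) (x : E) {j : ℕ} (hj : j < k) :
    ∫ w : sphere (0 : E) 1, ⟪x, (w : E)⟫ ^ j * Y w ∂volume.toSphere = 0 := by
  have hcont : Continuous fun z ↦ ⟪x, z⟫ ^ j * Y z :=
    ((continuous_const.inner continuous_id).pow j).mul
      (continuousOn_univ.1 hY.contDiffOn.continuousOn)
  have hdeg : IsHomogeneousOfDegree ((j + k : ℕ) : ℤ) fun z ↦ ⟪x, z⟫ ^ j * Y z := by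
    simpa only [Nat.cast_add] using (IsHomogeneousOfDegree.inner_pow x j).mul hhom
  exact hdeg.integral_toSphere_eq_zero_of_integral_mul_gaussianWeight_eq_zero hcont
    (integral_inner_pow_mul_gaussianWeight hY hhom x hj)

lemma integral_toSphere_eval_inner_mul (hY : HarmonicOnNhd Y univ)
    (hhom : IsHomogeneousOfDegree (k : ℤ) Y) (x : E) {P : Polynomial ℝ} (hP : P.degree < k) :
    ∫ w : sphere (0 : E) 1, P.eval ⟪x, (w : E)⟫ * Y w ∂volume.toSphere = 0 := by
  have hYc := continuousOn_univ.1 hY.contDiffOn.continuousOn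
  simp only [Polynomial.eval_eq_sum, Polynomial.sum, Finset.sum_mul, mul_assoc]
  rw [integral_finsetSum _ fun j _ ↦ Continuous.integrable_of_hasCompactSupport (by fun_prop)
    (HasCompactSupport.of_compactSpace _)]
  refine Finset.sum_eq_zero fun j hj ↦ ?_
  have hjk : j < k := by exact_mod_cast (Polynomial.le_degree_of_mem_supp j hj).trans_lt hP
  rw [integral_const_mul, integral_toSphere_inner_pow_mul hY hhom x hjk, mul_zero]

lemma integral_toSphere_exitRadius_pow_div_halfChord_mul (hY : HarmonicOnNhd Y univ)
    (hhom : IsHomogeneousOfDegree (k : ℤ) Y) {x : E} {s : ℝ} (hs : ‖x‖ < s) {m : ℕ} (hmk : m ≤ k)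
    (hodd : Odd (k + m)) :
    ∫ w : sphere (0 : E) 1, exitRadius x w s ^ m / halfChord x w s * Y w ∂volume.toSphere = 0 := by
  let h (w : E) : ℝ := exitRadius x w s ^ m / halfChord x w s * Y w
  have hYc := continuousOn_univ.1 hY.contDiffOn.continuousOn
  have hcont : Continuous h :=
    ((((continuous_exitRadius x).comp (.prodMk_right s)).pow m).div
      ((continuous_halfChord x).comp (.prodMk_right s)) fun w ↦ (halfChord_pos hs).ne').mul hYc
  obtain ⟨P, hPdeg, hP⟩ := exists_degree_lt_and_add_pow_sub_sub_pow_eq (s ^ 2 - ‖x‖ ^ 2) m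
  have hpair (w : E) : h w + h (-w) = P.eval ⟪x, w⟫ * Y w := by
    have hq := halfChord_pos (w := w) hs
    have hsign : (halfChord x w s - ⟪x, w⟫) ^ m * (-1) ^ k = -(⟪x, w⟫ - halfChord x w s) ^ m := by
      rw [← neg_sub, neg_pow, mul_right_comm, ← pow_add, add_comm m k, hodd.neg_one_pow,
        neg_one_mul]
    have hdiff := hP _ _ (halfChord_sq (w := w) hs)
    simp only [h, exitRadius_neg, halfChord_neg, hhom.neg_apply, zpow_natCast]
    rw [exitRadius]
    field_simp
    linear_combination Y w * hdiff + Y w * hsign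
  have hint {f : E → ℝ} (hf : Continuous f) :
      Integrable (fun w : sphere (0 : E) 1 ↦ f w) volume.toSphere :=
    (hf.comp continuous_subtype_val).integrable_of_hasCompactSupport
      (HasCompactSupport.of_compactSpace _)
  have hsum : (∫ w : sphere (0 : E) 1, h w ∂volume.toSphere) +
      ∫ w : sphere (0 : E) 1, h (-w) ∂volume.toSphere = 0 := by
    rw [← integral_add (hint hcont) (hint (f := fun w ↦ h (-w)) (hcont.comp continuous_neg))]
    simpa only [hpair] using integral_toSphere_eval_inner_mul hY hhom x
      (hPdeg.trans_le (by exact_mod_cast hmk))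
  rwa [integral_toSphere_comp_neg, add_self_eq_zero] at hsum

lemma integral_toSphere_exitRadius_zpow_div_halfChord_mul (hY : HarmonicOnNhd Y univ)
    (hhom : IsHomogeneousOfDegree (k : ℤ) Y) {x : E} {s : ℝ} (hs : ‖x‖ < s) {m : ℤ}
    (hmk : |m| ≤ k) (hodd : Odd (k + m)) :
    ∫ w : sphere (0 : E) 1, exitRadius x w s ^ m / halfChord x w s * Y w ∂volume.toSphere = 0 := by
  obtain ⟨n, rfl | rfl⟩ := m.eq_nat_or_neg
  · exact_mod_cast integral_toSphere_exitRadius_pow_div_halfChord_mul hY hhom hs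
      (by simpa using hmk) (by exact_mod_cast hodd)
  · have hpow := integral_toSphere_exitRadius_pow_div_halfChord_mul hY hhom hs (m := n)
      (by simpa using hmk) (by simpa [Int.odd_add, Nat.odd_add] using hodd)
    have hreflect (w : E) : exitRadius x w s ^ (-n : ℤ) / halfChord x w s * Y w =
        ((s ^ 2 - ‖x‖ ^ 2) ^ n)⁻¹ * (-1) ^ k *
          (exitRadius x (-w) s ^ n / halfChord x (-w) s * Y (-w)) := by
      have hsign : ((-1 : ℝ) ^ k) ^ 2 = 1 := by rw [← pow_mul', (even_two_mul k).neg_one_pow]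
      have hρ := exitRadius_pos (w := w) hs
      have hρ' := exitRadius_pos (w := -w) hs
      have hq := halfChord_pos (w := w) hs
      rw [← exitRadius_mul_exitRadius_neg (w := w) hs, halfChord_neg, hhom.neg_apply, zpow_neg,
        zpow_natCast, zpow_natCast, mul_pow]
      field_simp
      rw [hsign, mul_one]
    simp only [hreflect]
    rw [integral_const_mul, integral_toSphere_comp_neg fun w ↦
      exitRadius x w s ^ n / halfChord x w s * Y w, hpow, mul_zero]

end SphericalHarmonic

section RadialExtension

variable {E : Type*} [NormedAddCommGroup E] [NormedSpace ℝ E] {Y : E → ℝ}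

/-- The function `ρ ^ e * Y ω` in polar coordinates `z = ρ ω`, homogeneous of degree `e` under
positive dilations. -/
def radialExtension (e : ℤ) (Y : E → ℝ) (z : E) : ℝ := ‖z‖ ^ e * Y (‖z‖⁻¹ • z)

lemma continuousOn_radialExtension (e : ℤ) (hY : Continuous Y) :
    ContinuousOn (radialExtension e Y) {0}ᶜ := by
  have hnorm : ∀ z ∈ ({0}ᶜ : Set E), ‖z‖ ≠ 0 := fun z hz ↦ norm_ne_zero_iff.2 hz
  exact (continuousOn_id.norm.zpow₀ e fun z hz ↦ .inl (hnorm z hz)).mul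
    (hY.comp_continuousOn ((continuousOn_id.norm.inv₀ hnorm).smul continuousOn_id))

lemma radialExtension_smul (e : ℤ) (Y : E → ℝ) {r : ℝ} (hr : 0 < r) {w : E} (hw : ‖w‖ = 1) :
    radialExtension e Y (r • w) = r ^ e * Y w := by
  rw [radialExtension, norm_smul, hw, mul_one, Real.norm_of_nonneg hr.le, inv_smul_smul₀ hr.ne']

end RadialExtension

section SphericalMean

variable {E : Type*} [NormedAddCommGroup E] [InnerProductSpace ℝ E] [FiniteDimensional ℝ E]
  [MeasurableSpace E] [BorelSpace E] [Nontrivial E] {Y : E → ℝ} {k : ℕ}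

lemma integral_toSphere_radialExtension_add_smul (hY : HarmonicOnNhd Y univ)
    (hhom : IsHomogeneousOfDegree (k : ℤ) Y) {x : E} {s : ℝ} (hs : ‖x‖ < s) {m : ℤ}
    (hmk : |m| ≤ k) (hodd : Odd (k + m)) :
    ∫ w : sphere (0 : E) 1, radialExtension (m + 1 - finrank ℝ E) Y (x + s • (w : E))
      ∂volume.toSphere = 0 := by
  have hs0 : 0 < s := (norm_nonneg x).trans_lt hs
  have hexp : ((finrank ℝ E - 1 : ℕ) : ℤ) + (m + 1 - finrank ℝ E) = m := by
    have := finrank_pos (R := ℝ) (M := E)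
    lia
  have hintegrand (w : sphere (0 : E) 1) :
      (s / halfChord x w s) • exitRadius x w s ^ (finrank ℝ E - 1) •
        radialExtension (m + 1 - finrank ℝ E) Y (exitRadius x w s • (w : E)) =
      s * (exitRadius x w s ^ m / halfChord x w s * Y w) := by
    have hρ := exitRadius_pos (w := (w : E)) hs
    rw [radialExtension_smul _ Y hρ (norm_eq_of_mem_sphere w), smul_eq_mul, smul_eq_mul,
      ← mul_assoc (_ ^ _), ← zpow_natCast, ← zpow_add₀ hρ.ne', hexp]
    ring
  have hcentre := integral_toSphere_comp_add_smul (F := ℝ)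
    (continuousOn_radialExtension (m + 1 - finrank ℝ E)
      (continuousOn_univ.1 hY.contDiffOn.continuousOn)) hs
  simp only [hintegrand] at hcentre
  rw [integral_const_mul, integral_toSphere_exitRadius_zpow_div_halfChord_mul hY hhom hs hmk hodd,
    mul_zero] at hcentre
  exact (smul_eq_zero.1 hcentre).resolve_left (pow_pos hs0 _).ne'

theorem stmt14_general {μ : Measure E} [IsFiniteMeasure μ]
    (hμ : ∀ A : E ≃ₗᵢ[ℝ] E, MeasurePreserving A μ μ) {s : ℝ} (hμs : ∀ᵐ y ∂μ, ‖y‖ = s)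
    (hY : HarmonicOnNhd Y univ) (hhom : IsHomogeneousOfDegree (k : ℤ) Y) {i : ℕ} (hi : i < k)
    {x : E} (hs : ‖x‖ < s) :
    ∫ y, ‖x + y‖ ^ ((k : ℤ) - finrank ℝ E - 2 * i) * Y (‖x + y‖⁻¹ • (x + y)) ∂μ = 0 := by
  have hmk : |(k : ℤ) - 1 - 2 * i| ≤ k := by
    rw [abs_le]
    lia
  have hodd : Odd ((k : ℤ) + (k - 1 - 2 * i)) := ⟨k - 1 - i, by ring⟩
  have hmean := integral_toSphere_radialExtension_add_smul hY hhom hs hmk hodd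
  rw [show (k : ℤ) - 1 - 2 * i + 1 - finrank ℝ E = k - finrank ℝ E - 2 * i by ring] at hmean
  exact integral_eq_zero_of_integral_toSphere_eq_zero hμ ((norm_nonneg x).trans_lt hs) hμs hmean

end SphericalMean

section SurfaceMeasure

variable {d : ℕ} {s : ℝ}

instance isFiniteMeasure_sphMeasR : IsFiniteMeasure (sphMeasR d s) := by
  constructor
  rw [sphMeasR, Measure.smul_apply, Measure.restrict_apply_univ, smul_eq_mul]
  exact (ENNReal.inv_mul_le_one _).trans_lt ENNReal.one_lt_top

lemma measurePreserving_sphMeasR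
    (A : EuclideanSpace ℝ (Fin d) ≃ₗᵢ[ℝ] EuclideanSpace ℝ (Fin d)) :
    MeasurePreserving A (sphMeasR d s) (sphMeasR d s) := by
  have hsphere : A.toIsometryEquiv ⁻¹' sphere 0 s = sphere 0 s := by
    ext z
    simp
  have hpres := (A.toIsometryEquiv.measurePreserving_hausdorffMeasure (d - 1)).restrict_preimage
    (isClosed_sphere (x := 0) (ε := s)).measurableSet
  rw [hsphere] at hpres
  exact hpres.smul_measure _

lemma ae_norm_eq_sphMeasR : ∀ᵐ y ∂sphMeasR d s, ‖y‖ = s :=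
  Measure.ae_smul_measure ((ae_restrict_mem isClosed_sphere.measurableSet).mono
    fun _ ↦ mem_sphere_zero_iff_norm.1) _

end SurfaceMeasure

lemma harmonicOnNhd_univ_of_lapR_eq_zero {d : ℕ} {Y : EuclideanSpace ℝ (Fin d) → ℝ}
    (hY : ContDiff ℝ 2 Y) (hlap : ∀ z, lapR Y z = 0) : HarmonicOnNhd Y univ := by
  refine fun z _ ↦ ⟨hY.contDiffAt, .of_forall fun w ↦ ?_⟩
  rw [laplacian_eq_sum_fderiv_fderiv (EuclideanSpace.basisFun (Fin d) ℝ) hY.contDiffAt]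
  simpa only [lapR, EuclideanSpace.basisFun_apply, Pi.zero_apply] using hlap w

theorem stmt14 (d : ℕ) (hd : 2 ≤ d) (k : ℕ) (hk : 0 < k) (i : ℕ) (hi : i ≤ k - 1)
    (B : ℝ) (hB : 0 ≤ B)
    (Y : EuclideanSpace ℝ (Fin d) → ℝ) (hYsmooth : ContDiff ℝ (⊤ : ℕ∞) Y)
    (hYhom : ∀ (c : ℝ) (x : EuclideanSpace ℝ (Fin d)), Y (c • x) = c ^ k * Y x)
    (hYharm : ∀ x, lapR Y x = 0) :
    ∀ (x : EuclideanSpace ℝ (Fin d)) (s : ℝ), s > ‖x‖ + B →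
      (∫ y, ‖x + y‖ ^ ((k : ℤ) - d - 2 * i) * Y (‖x + y‖⁻¹ • (x + y)) ∂(sphMeasR d s)) = 0 := by
  intro x s hs
  have : Nontrivial (Fin d) := Fin.nontrivial_iff_two_le.2 hd
  have hharm := harmonicOnNhd_univ_of_lapR_eq_zero (contDiff_infty.1 hYsmooth 2) hYharm
  have hhom : IsHomogeneousOfDegree (k : ℤ) Y := fun c _ z ↦ by rw [hYhom, zpow_natCast]
  simpa only [finrank_euclideanSpace_fin] using
    stmt14_general measurePreserving_sphMeasR ae_norm_eq_sphMeasR hharm hhom (by lia : i < k)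
      ((le_add_of_nonneg_right hB).trans_lt hs)
end
end
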